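/- arXiv:1509.05724 — 2 statements merged into one kernel-verified Lean document; each statement's English description precedes it below -/
import Mathlib

section
/- Let s and t be real numbers with 0 < t < 1 < s < 2 and s + t = 2. Then there exist compact sets A, B ⊆ ℝ² with dimH A = s and dimH B = t such that, for H¹-almost every unit vector e ∈ S¹, the projections satisfy π_e(A) ∩ π_e(B) = ∅. -/
open MeasureTheory Metric Set
open scoped ENNReal RealInnerProductSpace
open Filter
open scoped NNReal Topology Nat

/-!
Write `C_β` for the Cantor set of those numbers in `[0, 1]` that, for every `k`, lie within
`2 ^ -(k! + k)` of a dyadic rational with only `β k!` binary digits. Let `t ≤ s`, take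
`B = {0} × C_t` and let `A` be the image of `C_α × C_γ` under
`(u, v) ↦ (1 / (1 + u), v / (1 + u))`, where `γ = min s 1` and `α = s - γ`. Two points of `A` and
`B` have the same projection to the line spanned by `e` exactly when `e` is orthogonal to the line
through them, and the slope of that line is `v - (1 + u) z` with `u ∈ C_α`, `v ∈ C_γ`, `z ∈ C_t`.
As `α + t ≤ 1` and `γ ≤ 1`, this polynomial maps dyadic rationals with `α k!`, `γ k!` and `t k!`
digits to numbers with `k!` digits, so all slopes are within `O(2 ^ -(k! + k))` of a set of
`O(2 ^ k!)` points and form a null set.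

The same approximation bounds `dim (C_α × C_γ)` by `α + γ` from above. For the lower bound, toss
coins for the digits of an element of `C_β` outside the blocks from `β k!` to `k! + k`, where they
have to vanish. The proportion of free digits among the first `n` is smallest at `n ≈ k!`, where it
is about `β` because earlier blocks are negligible, so the resulting law is Frostman with every
exponent below `β`.
-/

section HausdorffDimension

/-- The Frostman condition with exponent `d`: closed balls of radius `r` have mass at most a
constant multiple of `r ^ d`. It bounds Hausdorff dimensions from below. -/
def IsFrostman {X : Type*} [PseudoEMetricSpace X] [MeasurableSpace X] (μ : Measure X) (d : ℝ≥0) :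
    Prop :=
  ∃ C : ℝ≥0, ∀ (x : X) (r : ℝ≥0∞), μ (closedEBall x r) ≤ C * r ^ (d : ℝ)

theorem IsFrostman.prod {X Y : Type*} [PseudoEMetricSpace X] [MeasurableSpace X]
    [PseudoEMetricSpace Y] [MeasurableSpace Y] {μ : Measure X} {ν : Measure Y} [SFinite ν]
    {d d' : ℝ≥0} (hμ : IsFrostman μ d) (hν : IsFrostman ν d') :
    IsFrostman (μ.prod ν) (d + d') := by
  obtain ⟨C, hC⟩ := hμ
  obtain ⟨C', hC'⟩ := hν
  refine ⟨C * C', fun ⟨x, y⟩ r => ?_⟩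
  calc μ.prod ν (closedEBall (x, y) r) = μ (closedEBall x r) * ν (closedEBall y r) := by
        rw [← closedEBall_prod_same, Measure.prod_prod]
    _ ≤ (C * r ^ (d : ℝ)) * (C' * r ^ (d' : ℝ)) := mul_le_mul' (hC x r) (hC' y r)
    _ = (C * C' : ℝ≥0) * r ^ ((d + d' : ℝ≥0) : ℝ) := by
        rw [NNReal.coe_add, ENNReal.rpow_add_of_nonneg _ _ d.coe_nonneg d'.coe_nonneg,
          ENNReal.coe_mul, mul_mul_mul_comm]

theorem IsFrostman.le_dimH {X : Type*} [EMetricSpace X] [MeasurableSpace X] [BorelSpace X]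
    {μ : Measure X} {d : ℝ≥0} (hμ : IsFrostman μ d) {S : Set X} (hS : μ S ≠ 0) : d ≤ dimH S := by
  obtain ⟨C, hC⟩ := hμ
  have hle : (C : ℝ≥0∞)⁻¹ • μ ≤ μH[d] := by
    refine Measure.le_hausdorffMeasure d _ 1 one_pos fun T _ => ?_
    rcases T.eq_empty_or_nonempty with rfl | ⟨x, hx⟩
    · simp
    calc (C : ℝ≥0∞)⁻¹ * μ T ≤ (C : ℝ≥0∞)⁻¹ * (C * ediam T ^ (d : ℝ)) := by
          gcongr
          exact (measure_mono fun y hy => edist_le_ediam_of_mem hy hx).trans (hC x _)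
      _ ≤ ediam T ^ (d : ℝ) := by
          rw [← mul_assoc]
          exact mul_le_of_le_one_left' (ENNReal.inv_mul_le_one _)
  refine le_dimH_of_hausdorffMeasure_ne_zero (ne_bot_of_le_ne_bot ?_ (hle S))
  exact mul_ne_zero (ENNReal.inv_ne_zero.2 ENNReal.coe_ne_top) hS

theorem ofReal_inv_two_pow (n : ℕ) : ENNReal.ofReal (2⁻¹ ^ n) = 2⁻¹ ^ n := by
  rw [ENNReal.ofReal_pow (by norm_num), ENNReal.ofReal_inv_of_pos two_pos, ENNReal.ofReal_ofNat]

theorem exists_dyadic_near {r : ℝ≥0∞} (hr0 : r ≠ 0) (hr1 : r ≤ 1) :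
    ∃ n : ℕ, r ≤ 2⁻¹ ^ n ∧ 2⁻¹ ^ n ≤ 2 * r := by
  have htop : r ≠ ∞ := ne_top_of_le_ne_top ENNReal.one_ne_top hr1
  obtain ⟨n, hn, hn'⟩ := exists_nat_pow_near_of_lt_one (y := (2⁻¹ : ℝ))
    (ENNReal.toReal_pos hr0 htop) (ENNReal.toReal_mono ENNReal.one_ne_top hr1) (by norm_num)
    (by norm_num)
  simp_rw [← ofReal_inv_two_pow]
  refine ⟨n, (ENNReal.le_ofReal_iff_toReal_le htop (by positivity)).2 hn', ?_⟩
  refine ENNReal.ofReal_le_of_le_toReal ?_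
  rw [ENNReal.toReal_mul, ENNReal.toReal_ofNat]
  rw [pow_succ] at hn
  linarith

theorem IsFrostman.of_dyadic {X : Type*} [PseudoEMetricSpace X] [MeasurableSpace X]
    {μ : Measure X} [IsFiniteMeasure μ] {d : ℝ≥0} (C : ℝ≥0)
    (h : ∀ x (n : ℕ), μ (closedEBall x (2⁻¹ ^ n)) ≤ C * (2⁻¹ ^ n) ^ (d : ℝ)) :
    IsFrostman μ d := by
  refine ⟨(μ univ).toNNReal + C * 2 ^ (d : ℝ), fun x r => ?_⟩
  rw [ENNReal.coe_add, ENNReal.coe_toNNReal (measure_ne_top μ univ)]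
  rcases eq_or_ne r 0 with rfl | hr0
  · have hlim : Tendsto (fun n : ℕ => C * ((2⁻¹ : ℝ≥0∞) ^ n) ^ (d : ℝ)) atTop
        (𝓝 (C * 0 ^ (d : ℝ))) :=
      ENNReal.Tendsto.const_mul ((ENNReal.continuous_rpow_const.tendsto _).comp
        (ENNReal.tendsto_pow_atTop_nhds_zero_of_lt_one (by norm_num))) (by simp)
    calc μ (closedEBall x 0) ≤ C * 0 ^ (d : ℝ) := ge_of_tendsto' hlim fun n =>
          (measure_mono (closedEBall_subset_closedEBall zero_le)).trans (h x n)
      _ ≤ (μ univ + (C * 2 ^ (d : ℝ) : ℝ≥0)) * 0 ^ (d : ℝ) := by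
          gcongr
          refine le_add_of_le_right ?_
          exact_mod_cast le_mul_of_one_le_right' (NNReal.one_le_rpow one_le_two d.coe_nonneg)
  rcases le_total 1 r with hr1 | hr1
  · calc μ (closedEBall x r) ≤ μ univ * 1 := by simpa using measure_mono (subset_univ _)
      _ ≤ (μ univ + (C * 2 ^ (d : ℝ) : ℝ≥0)) * r ^ (d : ℝ) := by
          gcongr
          · exact le_self_add
          · simpa using ENNReal.rpow_le_rpow hr1 d.coe_nonneg
  obtain ⟨n, hn, hn'⟩ := exists_dyadic_near hr0 hr1
  calc μ (closedEBall x r) ≤ μ (closedEBall x (2⁻¹ ^ n)) :=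
        measure_mono (closedEBall_subset_closedEBall hn)
    _ ≤ C * (2⁻¹ ^ n) ^ (d : ℝ) := h x n
    _ ≤ C * (2 * r) ^ (d : ℝ) := by gcongr
    _ = (C * 2 ^ (d : ℝ) : ℝ≥0) * r ^ (d : ℝ) := by
        rw [ENNReal.mul_rpow_of_nonneg _ _ d.coe_nonneg, ENNReal.coe_mul,
          ENNReal.coe_rpow_of_nonneg _ d.coe_nonneg, ENNReal.coe_ofNat, mul_assoc]
    _ ≤ (μ univ + (C * 2 ^ (d : ℝ) : ℝ≥0)) * r ^ (d : ℝ) := by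
        gcongr
        exact le_add_self

theorem dimH_le_of_finset_cover {X : Type*} [EMetricSpace X] {S : Set X} {d : ℝ≥0}
    {F : ℕ → Finset X} {δ : ℕ → ℝ≥0∞} (hδ : Tendsto δ atTop (𝓝 0))
    (hcover : ∀ k, S ⊆ ⋃ x ∈ F k, closedEBall x (δ k)) (C : ℝ≥0)
    (hcard : ∀ k, (F k).card * δ k ^ (d : ℝ) ≤ C) : dimH S ≤ d := by
  borelize X
  apply dimH_le_of_hausdorffMeasure_ne_top
  have hδ' : Tendsto (fun k => 2 * δ k) atTop (𝓝 0) := by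
    simpa using ENNReal.Tendsto.const_mul hδ (Or.inr ENNReal.ofNat_ne_top)
  have hsum (k : ℕ) : ∑ x : F k, ediam (closedEBall (x : X) (δ k)) ^ (d : ℝ) ≤ 2 ^ (d : ℝ) * C :=
    calc ∑ x : F k, ediam (closedEBall (x : X) (δ k)) ^ (d : ℝ)
        ≤ ∑ _x : F k, (2 * δ k) ^ (d : ℝ) := by gcongr; exact ediam_closedEBall_le
      _ = 2 ^ (d : ℝ) * ((F k).card * δ k ^ (d : ℝ)) := by
          rw [Finset.sum_const, Finset.card_univ, Fintype.card_coe, nsmul_eq_mul,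
            ENNReal.mul_rpow_of_nonneg _ _ d.coe_nonneg, mul_left_comm]
      _ ≤ 2 ^ (d : ℝ) * C := by gcongr; exact hcard k
  have hle := Measure.hausdorffMeasure_le_liminf_sum d S _ hδ'
    (fun k (x : F k) => closedEBall (x : X) (δ k))
    (Eventually.of_forall fun k x => ediam_closedEBall_le)
    (Eventually.of_forall fun k => by simpa only [iUnion_subtype] using hcover k)
  refine ne_top_of_le_ne_top ?_ (hle.trans
    (liminf_le_of_frequently_le' (Frequently.of_forall hsum)))
  finiteness

theorem hausdorffMeasure_image_eq_zero_of_locallyLipschitz {X Y : Type*} [EMetricSpace X]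
    [MeasurableSpace X] [BorelSpace X] [SecondCountableTopology X] [EMetricSpace Y]
    [MeasurableSpace Y] [BorelSpace Y] {f : X → Y} (hf : LocallyLipschitz f) {d : ℝ} (hd : 0 ≤ d)
    {S : Set X} (hS : μH[d] S = 0) : μH[d] (f '' S) = 0 := by
  choose K t ht hK using hf
  obtain ⟨c, hc, hcover⟩ := TopologicalSpace.countable_cover_nhds ht
  have hsub : f '' S ⊆ ⋃ x ∈ c, f '' (S ∩ t x) := by
    rw [← image_iUnion₂, ← inter_iUnion₂, hcover, inter_univ]
  refine measure_mono_null hsub ((measure_biUnion_null_iff hc).2 fun x _ => ?_)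
  have hle := ((hK x).mono inter_subset_right).hausdorffMeasure_image_le hd (s := S ∩ t x)
  rwa [measure_mono_null inter_subset_left hS, mul_zero, nonpos_iff_eq_zero] at hle

end HausdorffDimension

section Digits

variable {b : ℕ} {x y : ℕ → Fin b} {n : ℕ}

/-- The natural number with base-`b` digits `x 0, …, x (n - 1)`, most significant digit first. -/
def digitPrefix (x : ℕ → Fin b) : ℕ → ℕ
  | 0 => 0
  | n + 1 => b * digitPrefix x n + x n

theorem digitPrefix_lt (x : ℕ → Fin b) (n : ℕ) : digitPrefix x n < b ^ n := by
  induction n with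
  | zero => simp [digitPrefix]
  | succ n ih =>
    calc b * digitPrefix x n + x n < b * digitPrefix x n + b := by gcongr; exact (x n).isLt
      _ = b * (digitPrefix x n + 1) := by ring
      _ ≤ b * b ^ n := by gcongr; exact ih
      _ = b ^ (n + 1) := by ring

theorem eq_of_digitPrefix_eq (h : digitPrefix x n = digitPrefix y n) : ∀ i < n, x i = y i := by
  induction n with
  | zero => simp
  | succ n ih =>
    have hb : 0 < b := (x n).pos
    have hlast : x n = y n := by
      have := congrArg (· % b) h
      simpa [digitPrefix, Nat.mul_add_mod, Nat.mod_eq_of_lt, Fin.ext_iff] using this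
    have hinit : digitPrefix x n = digitPrefix y n := by
      rw [digitPrefix, digitPrefix, hlast] at h
      exact Nat.eq_of_mul_eq_mul_left hb (Nat.add_right_cancel h)
    intro i hi
    rcases Nat.lt_succ_iff_lt_or_eq.1 hi with hi | rfl
    exacts [ih hinit i hi, hlast]

theorem sum_ofDigitsTerm_eq_digitPrefix (x : ℕ → Fin b) (n : ℕ) :
    ∑ i ∈ Finset.range n, Real.ofDigitsTerm x i = digitPrefix x n / b ^ n := by
  induction n with
  | zero => simp [digitPrefix]
  | succ n ih =>
    have hb : (b : ℝ) ≠ 0 := mod_cast (x n).pos.ne'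
    rw [Finset.sum_range_succ, ih, digitPrefix, Real.ofDigitsTerm]
    push_cast
    field_simp
    ring

theorem ofDigits_indicator_Iio [NeZero b] (x : ℕ → Fin b) (n : ℕ) :
    Real.ofDigits ((Iio n).indicator x) = digitPrefix x n / b ^ n := by
  have htail : (fun i => (Iio n).indicator x (i + n)) = fun _ => 0 := by ext i; simp
  have hhead : ∑ i ∈ Finset.range n, Real.ofDigitsTerm ((Iio n).indicator x) i =
      ∑ i ∈ Finset.range n, Real.ofDigitsTerm x i :=
    Finset.sum_congr rfl fun i hi => by
      simp [Real.ofDigitsTerm, indicator_of_mem (mem_Iio.2 (Finset.mem_range.1 hi))]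
  rw [Real.ofDigits_eq_sum_add_ofDigits _ n, hhead, sum_ofDigitsTerm_eq_digitPrefix, htail]
  simp [Real.ofDigits, Real.ofDigitsTerm]

theorem abs_ofDigits_sub_digitPrefix_le_of_eq_zero [NeZero b] (x : ℕ → Fin b) {m n : ℕ}
    (h : ∀ i, m ≤ i → i < n → x i = 0) :
    |Real.ofDigits x - digitPrefix x m / b ^ m| ≤ ((b : ℝ) ^ n)⁻¹ := by
  rw [← ofDigits_indicator_Iio]
  refine Real.abs_ofDigits_sub_ofDigits_le fun i hi => ?_
  rcases lt_or_ge i m with him | him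
  · exact (indicator_of_mem (mem_Iio.2 him) x).symm
  · rw [h i him hi, indicator_of_notMem (by simpa using him)]

end Digits

section CoinTossing

/-- The law of a sequence of independent fair coin tosses. -/
noncomputable def coinMeasure : Measure (ℕ → Fin 2) :=
  Measure.infinitePi fun _ => ProbabilityTheory.uniformOn univ

instance {α : Type*} [Finite α] [Nonempty α] [MeasurableSpace α] [MeasurableSingletonClass α] :
    IsProbabilityMeasure (ProbabilityTheory.uniformOn (univ : Set α)) :=
  ProbabilityTheory.isProbabilityMeasure_uniformOn finite_univ univ_nonempty

instance : IsProbabilityMeasure coinMeasure := by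
  unfold coinMeasure
  infer_instance

theorem coinMeasure_cylinder (s : Finset ℕ) (a : ℕ → Fin 2) :
    coinMeasure {x | ∀ i ∈ s, x i = a i} = 2⁻¹ ^ s.card := by
  have h : {x : ℕ → Fin 2 | ∀ i ∈ s, x i = a i} = Set.pi s fun i => {a i} := by
    ext; simp [Set.mem_pi]
  rw [h, coinMeasure, Measure.infinitePi_pi _ fun i _ => measurableSet_singleton _]
  simp [ProbabilityTheory.uniformOn_univ]

/-- The real number whose binary digits are those of `x` outside `Z`, and `0` on `Z`. -/
noncomputable def erasedReal (Z : Set ℕ) (x : ℕ → Fin 2) : ℝ :=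
  Real.ofDigits (Zᶜ.indicator x)

theorem measurable_erasedReal (Z : Set ℕ) : Measurable (erasedReal Z) := by
  refine Real.continuous_ofDigits.measurable.comp (measurable_pi_lambda _ fun i => ?_)
  simp only [indicator]
  split_ifs <;> fun_prop

open Classical in
/-- The positions below `n` of the digits that survive when those in `Z` are erased. -/
noncomputable def freePositions (Z : Set ℕ) (n : ℕ) : Finset ℕ := {i ∈ Finset.range n | i ∉ Z}

theorem mem_freePositions {Z : Set ℕ} {n i : ℕ} : i ∈ freePositions Z n ↔ i < n ∧ i ∉ Z := by
  simp [freePositions]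

theorem coinMeasure_digitPrefix_eq_le (Z : Set ℕ) (n q : ℕ) :
    coinMeasure {x | digitPrefix (Zᶜ.indicator x) n = q} ≤ 2⁻¹ ^ (freePositions Z n).card := by
  rcases eq_empty_or_nonempty {x : ℕ → Fin 2 | digitPrefix (Zᶜ.indicator x) n = q}
    with hempty | ⟨z, hz⟩
  · simp [hempty]
  rw [← coinMeasure_cylinder _ z]
  refine measure_mono fun x hx i hi => ?_
  obtain ⟨hin, hiZ⟩ := mem_freePositions.1 hi
  have hi' : i ∈ Zᶜ := hiZ
  simpa only [indicator_of_mem hi'] using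
    eq_of_digitPrefix_eq (x := Zᶜ.indicator x) (y := Zᶜ.indicator z) (hx.trans hz.symm) i hin

theorem digitPrefix_mem_Icc_of_mem_closedBall {x : ℕ → Fin 2} {c : ℝ} {n : ℕ}
    (hx : Real.ofDigits x ∈ closedBall c (2⁻¹ ^ n)) :
    digitPrefix x n ∈ Finset.Icc ⌈2 ^ n * c - 2⌉₊ ⌊2 ^ n * c + 2⌋₊ := by
  have happrox := abs_ofDigits_sub_digitPrefix_le_of_eq_zero x (m := n) (n := n) (by omega)
  rw [mem_closedBall, Real.dist_eq, inv_pow] at hx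
  have hdist : |(digitPrefix x n : ℝ) / 2 ^ n - c| ≤ 2 / 2 ^ n := by
    rw [abs_sub_comm] at happrox
    calc _ ≤ _ := abs_sub_le _ (Real.ofDigits x) _
      _ ≤ (2 ^ n)⁻¹ + (2 ^ n)⁻¹ := add_le_add (mod_cast happrox) hx
      _ = 2 / 2 ^ n := by ring
  have hscaled : |(digitPrefix x n : ℝ) - 2 ^ n * c| ≤ 2 := by
    have h2 : (0 : ℝ) < 2 ^ n := by positivity
    rwa [div_sub' h2.ne', abs_div, abs_of_pos h2, div_le_div_iff_of_pos_right h2] at hdist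
  rw [abs_le] at hscaled
  exact Finset.mem_Icc.2 ⟨Nat.ceil_le.2 (by linarith), Nat.le_floor (by linarith)⟩

theorem coinMeasure_erasedReal_mem_closedBall_le (Z : Set ℕ) (c : ℝ) (n : ℕ) :
    coinMeasure {x | erasedReal Z x ∈ closedBall c (2⁻¹ ^ n)} ≤
      5 * 2⁻¹ ^ (freePositions Z n).card := by
  set I := Finset.Icc ⌈2 ^ n * c - 2⌉₊ ⌊2 ^ n * c + 2⌋₊ with hI
  have hsub : {x | erasedReal Z x ∈ closedBall c (2⁻¹ ^ n)} ⊆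
      ⋃ q ∈ I, {x | digitPrefix (Zᶜ.indicator x) n = q} := fun x hx =>
    mem_biUnion (digitPrefix_mem_Icc_of_mem_closedBall hx) rfl
  have hcard : I.card ≤ 5 := by
    have hfloor : ⌊2 ^ n * c + 2⌋₊ ≤ ⌈2 ^ n * c - 2⌉₊ + 4 := by
      refine Nat.floor_le_of_le ?_
      push_cast
      linarith [Nat.le_ceil (2 ^ n * c - 2)]
    rw [hI, Nat.card_Icc]
    omega
  calc coinMeasure {x | erasedReal Z x ∈ closedBall c (2⁻¹ ^ n)}
      ≤ ∑ q ∈ I, coinMeasure {x | digitPrefix (Zᶜ.indicator x) n = q} :=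
        (measure_mono hsub).trans (measure_biUnion_finset_le _ _)
    _ ≤ ∑ _q ∈ I, 2⁻¹ ^ (freePositions Z n).card :=
        Finset.sum_le_sum fun q _ => coinMeasure_digitPrefix_eq_le Z n q
    _ ≤ 5 * 2⁻¹ ^ (freePositions Z n).card := by
        rw [Finset.sum_const, nsmul_eq_mul]
        gcongr
        exact_mod_cast hcard

end CoinTossing

section ZeroBlocks

variable {α β : ℝ≥0} {k : ℕ}

/-- The number of binary digits that determine an element of the Cantor set of dimension `β` up to
an error `2⁻¹ ^ (k ! + k)`. -/
noncomputable def numBits (β : ℝ≥0) (k : ℕ) : ℕ := ⌊β * k !⌋₊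

theorem numBits_le_mul_factorial (β : ℝ≥0) (k : ℕ) : numBits β k ≤ β * k ! :=
  Nat.floor_le zero_le

theorem mul_factorial_lt_numBits_add_one (β : ℝ≥0) (k : ℕ) : β * k ! < numBits β k + 1 :=
  Nat.lt_floor_add_one _

theorem numBits_add_le_factorial (h : α + β ≤ 1) (k : ℕ) : numBits α k + numBits β k ≤ k ! := by
  have : (numBits α k + numBits β k : ℝ≥0) ≤ k ! :=
    calc (numBits α k + numBits β k : ℝ≥0) ≤ α * k ! + β * k ! :=
          add_le_add (numBits_le_mul_factorial α k) (numBits_le_mul_factorial β k)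
      _ ≤ k ! := by rw [← add_mul]; exact mul_le_of_le_one_left' h
  exact_mod_cast this

theorem numBits_le_factorial (hβ : β ≤ 1) (k : ℕ) : numBits β k ≤ k ! :=
  (Nat.le_add_left _ _).trans (numBits_add_le_factorial (α := 0) (by rwa [zero_add]) k)

theorem numBits_mono (β : ℝ≥0) : Monotone (numBits β) := fun _ _ h => by
  unfold numBits
  gcongr

theorem exists_numBits_le_and_le_numBits (hβ : 0 < β) {n : ℕ} (hn : β < n) :
    ∃ k, numBits β (k + 1) ≤ n ∧ n ≤ numBits β (k + 2) := by
  have hmono : StrictMono fun k : ℕ => (β : ℝ) * (k + 1)! :=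
    strictMono_nat_of_lt_succ fun k => by
      gcongr
      exact k.lt_succ_self
  have hlim : Tendsto (fun k : ℕ => (β : ℝ) * (k + 1)!) atTop atTop :=
    ((tendsto_natCast_atTop_atTop.comp factorial_tendsto_atTop).comp
      (tendsto_add_atTop_nat 1)).const_mul_atTop (NNReal.coe_pos.2 hβ)
  obtain ⟨k, hk, hk'⟩ := hmono.exists_between_of_tendsto_atTop hlim (x := (n : ℝ))
    (by simpa using mod_cast hn)
  exact ⟨k, Nat.floor_le_of_le (mod_cast hk.le), Nat.le_floor (mod_cast hk')⟩

/-- The positions at which the digits of the elements of the Cantor set of dimension `β` vanish: a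
block of zeros extends from position `numBits β k` to slightly beyond position `k !`. -/
def zeroBlocks (β : ℝ≥0) : Set ℕ := {i | ∃ k, numBits β k ≤ i ∧ i < k ! + k}

theorem notMem_zeroBlocks {i : ℕ} (h : k ! + k ≤ i) (h' : i < numBits β (k + 1)) :
    i ∉ zeroBlocks β := by
  rintro ⟨j, hj, hj'⟩
  rcases Nat.lt_or_ge k j with hkj | hjk
  · exact (h'.trans_le (numBits_mono β hkj)).not_ge hj
  · exact absurd (Nat.factorial_le hjk) (by omega)

theorem numBits_add_sub_le_card_freePositions (hβ : β ≤ 1) {n : ℕ} (hn : numBits β (k + 1) ≤ n)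
    (hn' : n ≤ numBits β (k + 2)) :
    numBits β (k + 1) + (n - ((k + 1)! + (k + 1))) ≤
      (freePositions (zeroBlocks β) n).card + (k ! + k) := by
  have hbits := numBits_le_factorial hβ (k + 1)
  have hsub : Finset.Ico (k ! + k) (numBits β (k + 1)) ∪ Finset.Ico ((k + 1)! + (k + 1)) n ⊆
      freePositions (zeroBlocks β) n := by
    refine Finset.union_subset (fun i hi => ?_) fun i hi => ?_ <;> rw [Finset.mem_Ico] at hi
    · exact mem_freePositions.2 ⟨hi.2.trans_le hn, notMem_zeroBlocks hi.1 hi.2⟩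
    · exact mem_freePositions.2 ⟨hi.2, notMem_zeroBlocks hi.1 (hi.2.trans_le hn')⟩
  have hdisj : Disjoint (Finset.Ico (k ! + k) (numBits β (k + 1)))
      (Finset.Ico ((k + 1)! + (k + 1)) n) :=
    Finset.disjoint_left.2 fun i hi hi' => by rw [Finset.mem_Ico] at hi hi'; omega
  have hcard := Finset.card_le_card hsub
  rw [Finset.card_union_of_disjoint hdisj, Nat.card_Ico, Nat.card_Ico] at hcard
  omega

theorem exists_factorial_le_mul_factorial_succ_add {η : ℝ} (hη : 0 < η) :
    ∃ C : ℕ, ∀ k : ℕ, (k ! : ℝ) ≤ η * (k + 1)! + C := by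
  obtain ⟨K, hK⟩ := exists_nat_gt η⁻¹
  refine ⟨K !, fun k => ?_⟩
  rcases le_total k K with hkK | hKk
  · have : (k ! : ℝ) ≤ K ! := mod_cast Nat.factorial_le hkK
    exact this.trans (le_add_of_nonneg_left (by positivity))
  · have hk : 1 ≤ η * (k + 1) := by
      rw [← inv_le_iff_one_le_mul₀' hη]
      have : (K : ℝ) ≤ k := mod_cast hKk
      linarith
    calc (k ! : ℝ) ≤ η * (k + 1) * k ! := le_mul_of_one_le_left (by positivity) hk
      _ = η * (k + 1)! := by rw [Nat.factorial_succ]; push_cast; ring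
      _ ≤ η * (k + 1)! + K ! := le_add_of_nonneg_right (by positivity)

theorem mul_le_card_freePositions_add_factorial (hβ : β ≤ 1) {n : ℕ}
    (hn : numBits β (k + 1) ≤ n) (hn' : n ≤ numBits β (k + 2)) :
    (β : ℝ) * n ≤ (freePositions (zeroBlocks β) n).card + 5 * k ! := by
  have hβ' : (β : ℝ) ≤ 1 := mod_cast hβ
  have hcount : (numBits β (k + 1) : ℝ) + (n - ((k + 1)! + (k + 1)) : ℕ) ≤
      (freePositions (zeroBlocks β) n).card + (k ! + k) :=
    mod_cast numBits_add_sub_le_card_freePositions hβ hn hn'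
  have hbits : (β : ℝ) * (k + 1)! < numBits β (k + 1) + 1 :=
    mod_cast mul_factorial_lt_numBits_add_one β (k + 1)
  have hk : (k : ℝ) ≤ k ! := mod_cast Nat.self_le_factorial k
  have hk' : (1 : ℝ) ≤ k ! := mod_cast Nat.factorial_pos k
  have hsub : (n : ℝ) ≤ (k + 1)! + ((k + 1) + (n - ((k + 1)! + (k + 1)) : ℕ)) :=
    mod_cast (by omega : n ≤ (k + 1)! + ((k + 1) + (n - ((k + 1)! + (k + 1)))))
  calc (β : ℝ) * n ≤ β * ((k + 1)! + ((k + 1) + (n - ((k + 1)! + (k + 1)) : ℕ))) := by gcongr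
    _ ≤ β * (k + 1)! + ((k + 1) + (n - ((k + 1)! + (k + 1)) : ℕ)) := by
        rw [mul_add]
        gcongr
        exact mul_le_of_le_one_left (by positivity) hβ'
    _ ≤ (freePositions (zeroBlocks β) n).card + 5 * k ! := by linarith

theorem exists_mul_le_card_freePositions_add (hβ : β ≤ 1) {ε : ℝ≥0} (hε : 0 < ε) :
    ∃ C : ℕ, ∀ n, ((β - ε : ℝ≥0) : ℝ) * n ≤ (freePositions (zeroBlocks β) n).card + C := by
  rcases le_total β ε with hβε | hεβ
  · exact ⟨0, fun n => by simp [tsub_eq_zero_of_le hβε]⟩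
  have hβ0 : 0 < β := hε.trans_le hεβ
  obtain ⟨C, hC⟩ := exists_factorial_le_mul_factorial_succ_add (η := ε * β / 5) (by positivity)
  refine ⟨5 * C + 1, fun n => ?_⟩
  rw [NNReal.coe_sub hεβ]
  rcases le_or_gt (n : ℝ≥0) β with hnβ | hβn
  · have hn : (n : ℝ) ≤ 1 := mod_cast hnβ.trans hβ
    have hβε : (β - ε : ℝ) ≤ 1 := (sub_le_self _ ε.coe_nonneg).trans (mod_cast hβ)
    have hle : (β - ε : ℝ) * n ≤ 1 := mul_le_one₀ hβε (by positivity) hn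
    have hpos : 1 ≤ (freePositions (zeroBlocks β) n).card + (5 * C + 1) := Nat.le_add_left 1 _
    exact hle.trans (mod_cast hpos)
  obtain ⟨k, hk, hk'⟩ := exists_numBits_le_and_le_numBits hβ0 hβn
  have hβk : (β : ℝ) * (k + 1)! ≤ n + 1 :=
    calc (β : ℝ) * (k + 1)! ≤ numBits β (k + 1) + 1 :=
          mod_cast (mul_factorial_lt_numBits_add_one β (k + 1)).le
      _ ≤ n + 1 := by gcongr
  have hεn : 5 * (k ! : ℝ) ≤ ε * n + (5 * C + 1) :=
    calc 5 * (k ! : ℝ) ≤ 5 * (ε * β / 5 * (k + 1)! + C) := by gcongr; exact hC k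
      _ = ε * (β * (k + 1)!) + 5 * C := by ring
      _ ≤ ε * (n + 1) + 5 * C := by gcongr
      _ ≤ ε * n + (5 * C + 1) := by
        have : (ε : ℝ) ≤ 1 := mod_cast hεβ.trans hβ
        linarith
  have := mul_le_card_freePositions_add_factorial hβ hk hk'
  rw [sub_mul]
  push_cast
  linarith

end ZeroBlocks

section CantorSet

variable {α β γ : ℝ≥0}

/-- The law of a random number in `[0, 1]` whose binary digits vanish at the positions in
`zeroBlocks β` and are independent fair coin tosses elsewhere. -/
noncomputable def gapCantorMeasure (β : ℝ≥0) : Measure ℝ :=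
  coinMeasure.map (erasedReal (zeroBlocks β))

instance (β : ℝ≥0) : IsProbabilityMeasure (gapCantorMeasure β) :=
  Measure.isProbabilityMeasure_map (measurable_erasedReal _).aemeasurable

theorem isFrostman_gapCantorMeasure (hβ : β ≤ 1) {ε : ℝ≥0} (hε : 0 < ε) :
    IsFrostman (gapCantorMeasure β) (β - ε) := by
  obtain ⟨C, hC⟩ := exists_mul_le_card_freePositions_add hβ hε
  refine IsFrostman.of_dyadic (5 * 2 ^ C) fun c n => ?_
  set N := (freePositions (zeroBlocks β) n).card
  have hball : closedEBall c (2⁻¹ ^ n) = closedBall c (2⁻¹ ^ n) := by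
    rw [← ofReal_inv_two_pow, closedEBall_ofReal (by positivity)]
  calc gapCantorMeasure β (closedEBall c (2⁻¹ ^ n))
      = coinMeasure {x | erasedReal (zeroBlocks β) x ∈ closedBall c (2⁻¹ ^ n)} := by
        rw [hball]
        exact Measure.map_apply (measurable_erasedReal _) isClosed_closedBall.measurableSet
    _ ≤ 5 * 2⁻¹ ^ N := coinMeasure_erasedReal_mem_closedBall_le _ c n
    _ = (5 * 2 ^ C : ℝ≥0) * 2⁻¹ ^ (N + C) := by
        push_cast
        rw [pow_add, mul_mul_mul_comm, ← mul_pow, ENNReal.mul_inv_cancel two_ne_zero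
          ENNReal.ofNat_ne_top, one_pow, mul_one]
    _ ≤ (5 * 2 ^ C : ℝ≥0) * (2⁻¹ ^ n) ^ ((β - ε : ℝ≥0) : ℝ) := by
        gcongr
        rw [← ENNReal.rpow_natCast, ← ENNReal.rpow_natCast, ← ENNReal.rpow_mul, mul_comm]
        refine ENNReal.rpow_le_rpow_of_exponent_ge (by norm_num) ?_
        exact_mod_cast hC n

/-- The dyadic rationals `p / 2 ^ n` in `[0, 1)`. -/
noncomputable def dyadicGrid (n : ℕ) : Finset ℝ :=
  (Finset.range (2 ^ n)).image fun p : ℕ => (p : ℝ) / 2 ^ n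

theorem dyadicGrid_subset_Icc (n : ℕ) : (dyadicGrid n : Set ℝ) ⊆ Icc 0 1 := by
  intro p hp
  obtain ⟨i, hi, rfl⟩ := Finset.mem_image.1 (Finset.mem_coe.1 hp)
  have hi' : (i : ℝ) ≤ 2 ^ n := mod_cast (Finset.mem_range.1 hi).le
  exact ⟨by positivity, div_le_one_of_le₀ hi' (by positivity)⟩

theorem card_dyadicGrid_le (n : ℕ) : (dyadicGrid n).card ≤ 2 ^ n :=
  Finset.card_image_le.trans_eq (Finset.card_range _)

theorem digitPrefix_div_mem_dyadicGrid (x : ℕ → Fin 2) (n : ℕ) :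
    (digitPrefix x n : ℝ) / 2 ^ n ∈ dyadicGrid n :=
  Finset.mem_image_of_mem _ (Finset.mem_range.2 (digitPrefix_lt x n))

/-- A Cantor set in `[0, 1]` of dimension `β` (if `β ≤ 1`): its elements are approximated, for
every `k`, up to `2⁻¹ ^ (k ! + k)` by dyadic rationals with only `β * k !` binary digits. -/
def gapCantorSet (β : ℝ≥0) : Set ℝ :=
  Icc 0 1 ∩ ⋂ k, ⋃ p ∈ dyadicGrid (numBits β k), closedBall p (2⁻¹ ^ (k ! + k))

theorem gapCantorSet_subset_Icc (β : ℝ≥0) : gapCantorSet β ⊆ Icc 0 1 := inter_subset_left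

theorem exists_mem_dyadicGrid_dist_le {x : ℝ} (hx : x ∈ gapCantorSet β) (k : ℕ) :
    ∃ p ∈ dyadicGrid (numBits β k), dist x p ≤ 2⁻¹ ^ (k ! + k) := by
  simpa using mem_iInter.1 hx.2 k

theorem isCompact_gapCantorSet (β : ℝ≥0) : IsCompact (gapCantorSet β) :=
  isCompact_Icc.inter_right <| isClosed_iInter fun _ =>
    (dyadicGrid _).finite_toSet.isClosed_biUnion fun _ _ => isClosed_closedBall

theorem erasedReal_mem_gapCantorSet (β : ℝ≥0) (x : ℕ → Fin 2) :
    erasedReal (zeroBlocks β) x ∈ gapCantorSet β := by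
  refine ⟨⟨Real.ofDigits_nonneg _, Real.ofDigits_le_one _⟩, mem_iInter.2 fun k => ?_⟩
  refine mem_biUnion (digitPrefix_div_mem_dyadicGrid ((zeroBlocks β)ᶜ.indicator x) _) ?_
  rw [mem_closedBall, Real.dist_eq, inv_pow]
  refine mod_cast abs_ofDigits_sub_digitPrefix_le_of_eq_zero _ fun i hi hi' => ?_
  have hi_mem : i ∈ zeroBlocks β := ⟨k, hi, hi'⟩
  exact indicator_of_notMem (notMem_compl_iff.2 hi_mem) x

theorem gapCantorMeasure_gapCantorSet (β : ℝ≥0) : gapCantorMeasure β (gapCantorSet β) = 1 := by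
  have huniv : erasedReal (zeroBlocks β) ⁻¹' gapCantorSet β = univ :=
    eq_univ_of_forall (erasedReal_mem_gapCantorSet β)
  rw [gapCantorMeasure, Measure.map_apply (measurable_erasedReal _)
    (isCompact_gapCantorSet β).measurableSet, huniv, measure_univ]

theorem gapCantorSet_zero : gapCantorSet 0 = {0} := by
  refine (Nonempty.subset_singleton_iff ⟨_, erasedReal_mem_gapCantorSet 0 0⟩).1 fun x hx => ?_
  have hlim : Tendsto (fun k : ℕ => (2⁻¹ : ℝ) ^ (k ! + k)) atTop (𝓝 0) :=
    (tendsto_pow_atTop_nhds_zero_of_lt_one (by norm_num) (by norm_num)).comp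
      (tendsto_atTop_mono (fun k => Nat.le_add_left k (k !)) tendsto_id)
  refine dist_le_zero.1 (ge_of_tendsto' hlim fun k => ?_)
  simpa [dyadicGrid, numBits] using exists_mem_dyadicGrid_dist_le hx k

theorem gapCantorSet_prod_subset_biUnion_closedEBall (α γ : ℝ≥0) (k : ℕ) :
    gapCantorSet α ×ˢ gapCantorSet γ ⊆
      ⋃ p ∈ dyadicGrid (numBits α k) ×ˢ dyadicGrid (numBits γ k), closedEBall p (2⁻¹ ^ k !) := by
  rintro ⟨x, y⟩ ⟨hx, hy⟩
  obtain ⟨p, hp, hxp⟩ := exists_mem_dyadicGrid_dist_le hx k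
  obtain ⟨q, hq, hyq⟩ := exists_mem_dyadicGrid_dist_le hy k
  refine mem_biUnion (Finset.mk_mem_product hp hq) ?_
  rw [← ofReal_inv_two_pow, closedEBall_ofReal (by positivity), ← closedBall_prod_same]
  have hpow : (2⁻¹ : ℝ) ^ (k ! + k) ≤ 2⁻¹ ^ k ! :=
    pow_le_pow_of_le_one (by norm_num) (by norm_num) (Nat.le_add_right _ _)
  exact ⟨hxp.trans hpow, hyq.trans hpow⟩

theorem card_dyadicGrid_numBits_prod_mul_le (α γ : ℝ≥0) (k : ℕ) :
    (dyadicGrid (numBits α k) ×ˢ dyadicGrid (numBits γ k)).card *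
      ((2⁻¹ : ℝ≥0∞) ^ k !) ^ ((α + γ : ℝ≥0) : ℝ) ≤ 1 := by
  have hcard : (dyadicGrid (numBits α k) ×ˢ dyadicGrid (numBits γ k)).card ≤
      2 ^ (numBits α k + numBits γ k) := by
    rw [Finset.card_product, pow_add]
    exact Nat.mul_le_mul (card_dyadicGrid_le _) (card_dyadicGrid_le _)
  have hbits : (numBits α k + numBits γ k : ℕ) ≤ (k ! : ℝ) * (α + γ : ℝ≥0) := by
    rw [mul_comm]
    push_cast
    rw [add_mul]
    exact add_le_add (mod_cast numBits_le_mul_factorial α k)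
      (mod_cast numBits_le_mul_factorial γ k)
  calc _ ≤ (2 : ℝ≥0∞) ^ (numBits α k + numBits γ k) * 2⁻¹ ^ (numBits α k + numBits γ k) := by
        gcongr
        · exact_mod_cast hcard
        · rw [← ENNReal.rpow_natCast, ← ENNReal.rpow_mul, ← ENNReal.rpow_natCast]
          exact ENNReal.rpow_le_rpow_of_exponent_ge (by norm_num) hbits
    _ = 1 := by rw [← mul_pow, ENNReal.mul_inv_cancel two_ne_zero ENNReal.ofNat_ne_top, one_pow]

theorem dimH_gapCantorSet_prod_le (α γ : ℝ≥0) :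
    dimH (gapCantorSet α ×ˢ gapCantorSet γ) ≤ (α + γ : ℝ≥0) := by
  have hδ : Tendsto (fun k : ℕ => (2⁻¹ : ℝ≥0∞) ^ k !) atTop (𝓝 0) :=
    (ENNReal.tendsto_pow_atTop_nhds_zero_of_lt_one (by norm_num)).comp factorial_tendsto_atTop
  exact dimH_le_of_finset_cover hδ (gapCantorSet_prod_subset_biUnion_closedEBall α γ) 1
    (mod_cast card_dyadicGrid_numBits_prod_mul_le α γ)

theorem le_dimH_gapCantorSet_prod (hα : α ≤ 1) (hγ : γ ≤ 1) :
    (α + γ : ℝ≥0) ≤ dimH (gapCantorSet α ×ˢ gapCantorSet γ) := by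
  refine ENNReal.le_of_forall_pos_le_add fun ε hε _ => ?_
  have hfrost := (isFrostman_gapCantorMeasure hα (half_pos hε)).prod
    (isFrostman_gapCantorMeasure hγ (half_pos hε))
  calc ((α + γ : ℝ≥0) : ℝ≥0∞) ≤ ((α - ε / 2 + (γ - ε / 2) : ℝ≥0) : ℝ≥0∞) + ε := by
        norm_cast
        calc α + γ ≤ (α - ε / 2 + ε / 2) + (γ - ε / 2 + ε / 2) :=
              add_le_add le_tsub_add le_tsub_add
          _ = α - ε / 2 + (γ - ε / 2) + ε := by rw [add_add_add_comm, add_halves]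
    _ ≤ dimH (gapCantorSet α ×ˢ gapCantorSet γ) + ε := by
        gcongr
        refine hfrost.le_dimH ?_
        simp [Measure.prod_prod, gapCantorMeasure_gapCantorSet]

theorem dimH_gapCantorSet_prod (hα : α ≤ 1) (hγ : γ ≤ 1) :
    dimH (gapCantorSet α ×ˢ gapCantorSet γ) = (α + γ : ℝ≥0) :=
  (dimH_gapCantorSet_prod_le α γ).antisymm (le_dimH_gapCantorSet_prod hα hγ)

theorem dimH_gapCantorSet (hβ : β ≤ 1) : dimH (gapCantorSet β) = β := by
  have hiso : Isometry fun z : ℝ => ((0 : ℝ), z) := fun z w => by simp [Prod.edist_eq]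
  rw [← hiso.dimH_image, ← singleton_prod, ← gapCantorSet_zero,
    dimH_gapCantorSet_prod zero_le_one hβ, zero_add]

end CantorSet

section Slopes

variable {α γ t : ℝ≥0}

/-- The numbers `w` for which some line of slope `w` meets both `{0} × gapCantorSet t` and the
projective image of `gapCantorSet α × gapCantorSet γ`. -/
def slopeSet (α γ t : ℝ≥0) : Set ℝ :=
  {w | ∃ u ∈ gapCantorSet α, ∃ v ∈ gapCantorSet γ, ∃ z ∈ gapCantorSet t, w = v - (1 + u) * z}

theorem exists_int_sub_one_add_mul_eq_div {a b c N : ℕ} (hab : a + b ≤ N) (hc : c ≤ N) {p q m : ℝ}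
    (hp : p ∈ dyadicGrid a) (hq : q ∈ dyadicGrid b) (hm : m ∈ dyadicGrid c) :
    ∃ j ∈ Finset.Icc (-2 * 2 ^ N : ℤ) (2 ^ N), m - (1 + p) * q = j / 2 ^ N := by
  obtain ⟨hp0, hp1⟩ := dyadicGrid_subset_Icc a hp
  obtain ⟨hq0, hq1⟩ := dyadicGrid_subset_Icc b hq
  obtain ⟨hm0, hm1⟩ := dyadicGrid_subset_Icc c hm
  obtain ⟨d, rfl⟩ := Nat.exists_eq_add_of_le hab
  obtain ⟨c', hc'⟩ := Nat.exists_eq_add_of_le hc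
  obtain ⟨j, hj⟩ : ∃ j : ℤ, m - (1 + p) * q = j / 2 ^ (a + b + d) := by
    obtain ⟨p, -, rfl⟩ := Finset.mem_image.1 hp
    obtain ⟨q, -, rfl⟩ := Finset.mem_image.1 hq
    obtain ⟨m, -, rfl⟩ := Finset.mem_image.1 hm
    have hm' : (m : ℝ) / 2 ^ c = m * 2 ^ c' / 2 ^ (a + b + d) := by
      rw [hc', pow_add]
      field_simp
    refine ⟨m * 2 ^ c' - (2 ^ a + p) * q * 2 ^ d, ?_⟩
    rw [hm']
    push_cast
    field_simp
    ring
  have hj' : (j : ℝ) = (m - (1 + p) * q) * 2 ^ (a + b + d) := by rw [hj]; field_simp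
  have hlow : -2 ≤ m - (1 + p) * q := by nlinarith
  have hup : m - (1 + p) * q ≤ 1 := by nlinarith
  refine ⟨j, Finset.mem_Icc.2 ⟨?_, ?_⟩, hj⟩ <;> rify <;> rw [hj']
  · gcongr
  · exact mul_le_of_le_one_left (by positivity) hup

theorem abs_sub_one_add_mul_sub_le {u v z p q m ε : ℝ} (hz : z ∈ Icc (0 : ℝ) 1)
    (hp : p ∈ Icc (0 : ℝ) 1) (hu : |u - p| ≤ ε) (hv : |v - m| ≤ ε) (hzq : |z - q| ≤ ε) :
    |v - (1 + u) * z - (m - (1 + p) * q)| ≤ 4 * ε := by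
  have hsplit : v - (1 + u) * z - (m - (1 + p) * q) =
      (v - m) - ((1 + p) * (z - q) + (u - p) * z) := by ring
  have hzq' : |(1 + p) * (z - q)| ≤ 2 * ε := by
    rw [abs_mul, abs_of_nonneg (by linarith [hp.1])]
    gcongr
    linarith [hp.2]
  have huz : |(u - p) * z| ≤ ε := by
    rw [abs_mul, abs_of_nonneg hz.1]
    exact (mul_le_of_le_one_right (abs_nonneg _) hz.2).trans hu
  rw [hsplit]
  linarith [abs_sub (v - m) ((1 + p) * (z - q) + (u - p) * z),
    abs_add_le ((1 + p) * (z - q)) ((u - p) * z)]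

theorem slopeSet_subset_biUnion_closedBall (hαt : α + t ≤ 1) (hγ : γ ≤ 1) (k : ℕ) :
    slopeSet α γ t ⊆ ⋃ j ∈ Finset.Icc (-2 * 2 ^ k ! : ℤ) (2 ^ k !),
      closedBall (j / 2 ^ k ! : ℝ) (4 * 2⁻¹ ^ (k ! + k)) := by
  rintro _ ⟨u, hu, v, hv, z, hz, rfl⟩
  obtain ⟨p, hp, hup⟩ := exists_mem_dyadicGrid_dist_le hu k
  obtain ⟨m, hm, hvm⟩ := exists_mem_dyadicGrid_dist_le hv k
  obtain ⟨q, hq, hzq⟩ := exists_mem_dyadicGrid_dist_le hz k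
  obtain ⟨j, hj, hjeq⟩ := exists_int_sub_one_add_mul_eq_div (numBits_add_le_factorial hαt k)
    (numBits_le_factorial hγ k) hp hq hm
  refine mem_biUnion hj ?_
  rw [mem_closedBall, ← hjeq]
  exact abs_sub_one_add_mul_sub_le (gapCantorSet_subset_Icc t hz) (dyadicGrid_subset_Icc _ hp)
    hup hvm hzq

theorem volume_slopeSet (hαt : α + t ≤ 1) (hγ : γ ≤ 1) : volume (slopeSet α γ t) = 0 := by
  have hlim : Tendsto (fun k : ℕ => ENNReal.ofReal (32 * 2⁻¹ ^ k)) atTop (𝓝 0) := by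
    simpa using ENNReal.tendsto_ofReal
      ((tendsto_pow_atTop_nhds_zero_of_lt_one (r := (2⁻¹ : ℝ)) (by norm_num)
        (by norm_num)).const_mul 32)
  refine nonpos_iff_eq_zero.1 (ge_of_tendsto' hlim fun k => ?_)
  set J := Finset.Icc (-2 * 2 ^ k ! : ℤ) (2 ^ k !) with hJ
  have hcard : J.card ≤ 4 * 2 ^ k ! := by
    have h1 : (1 : ℤ) ≤ 2 ^ k ! := one_le_pow₀ one_le_two
    rw [hJ, Int.card_Icc, Int.toNat_le]
    push_cast
    linarith
  calc volume (slopeSet α γ t)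
      ≤ ∑ j ∈ J, volume (closedBall (j / 2 ^ k ! : ℝ) (4 * 2⁻¹ ^ (k ! + k))) :=
        (measure_mono (slopeSet_subset_biUnion_closedBall hαt hγ k)).trans
          (measure_biUnion_finset_le _ _)
    _ = J.card * ENNReal.ofReal (2 * (4 * 2⁻¹ ^ (k ! + k))) := by
        simp only [Real.volume_closedBall, Finset.sum_const, nsmul_eq_mul]
    _ ≤ (4 * 2 ^ k ! : ℕ) * ENNReal.ofReal (2 * (4 * 2⁻¹ ^ (k ! + k))) := by gcongr
    _ = ENNReal.ofReal (32 * 2⁻¹ ^ k) := by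
        rw [← ENNReal.ofReal_natCast, ← ENNReal.ofReal_mul (by positivity)]
        congr 1
        push_cast
        rw [pow_add, inv_pow, inv_pow]
        field_simp
        norm_num

end Slopes

section Plane

/-- The projective map `(u, v) ↦ (1 / (1 + u), v / (1 + u))`. -/
noncomputable def projectiveMap (p : ℝ × ℝ) : EuclideanSpace ℝ (Fin 2) :=
  !₂[(1 + p.1)⁻¹, p.2 * (1 + p.1)⁻¹]

theorem contDiffOn_projectiveMap : ContDiffOn ℝ 1 projectiveMap {p | -1 < p.1} := by
  have hinv : ContDiffOn ℝ 1 (fun p : ℝ × ℝ => (1 + p.1)⁻¹) {p | -1 < p.1} :=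
    ContDiffOn.inv (by fun_prop) fun p (hp : -1 < p.1) => by linarith
  rw [contDiffOn_euclidean]
  intro i
  fin_cases i
  · exact hinv
  · exact contDiffOn_snd.mul hinv

theorem dimH_image_projectiveMap {K : Set (ℝ × ℝ)} (hK : K ⊆ {p | -1 < p.1}) :
    dimH (projectiveMap '' K) = dimH K := by
  apply le_antisymm
  · exact contDiffOn_projectiveMap.dimH_image_le
      ((convex_Ioi (-1)).linear_preimage (LinearMap.fst ℝ ℝ ℝ)) hK
  set inverse : EuclideanSpace ℝ (Fin 2) → ℝ × ℝ := fun e => ((e 0)⁻¹ - 1, e 1 * (e 0)⁻¹)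
  have hleft : inverse '' (projectiveMap '' K) = K := by
    rw [image_image]
    refine (image_congr fun p hp => ?_).trans (image_id K)
    have hp1 : -1 < p.1 := hK hp
    have hp0 : 1 + p.1 ≠ 0 := by linarith
    ext <;> simp [inverse, projectiveMap, hp0]
  have hsmooth : ContDiffOn ℝ 1 inverse {e | 0 < e 0} := by
    have hinv : ContDiffOn ℝ 1 (fun e : EuclideanSpace ℝ (Fin 2) => (e 0)⁻¹) {e | 0 < e 0} :=
      ContDiffOn.inv (by fun_prop) fun e he => he.ne'
    exact (hinv.sub contDiffOn_const).prodMk (ContDiffOn.mul (by fun_prop) hinv)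
  have hconvex : Convex ℝ {e : EuclideanSpace ℝ (Fin 2) | 0 < e 0} :=
    (convex_Ioi 0).linear_preimage (EuclideanSpace.proj 0).toLinearMap
  conv_lhs => rw [← hleft]
  refine hsmooth.dimH_image_le hconvex ?_
  rintro _ ⟨p, hp, rfl⟩
  have hp1 : -1 < p.1 := hK hp
  have hpos : 0 < (1 + p.1)⁻¹ := inv_pos.2 (by linarith)
  exact hpos

theorem inner_projectiveMap_eq_inner_single_iff {u v z : ℝ} (hu : -1 < u)
    (e : EuclideanSpace ℝ (Fin 2)) :
    ⟪projectiveMap (u, v), e⟫ = ⟪EuclideanSpace.single 1 z, e⟫ ↔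
      e 0 + e 1 * (v - (1 + u) * z) = 0 := by
  have hu' : 1 + u ≠ 0 := by linarith
  have hleft : ⟪projectiveMap (u, v), e⟫ = (e 0 + e 1 * v) / (1 + u) := by
    have hsum : ⟪projectiveMap (u, v), e⟫ = e 0 * (1 + u)⁻¹ + e 1 * (v * (1 + u)⁻¹) := by
      simp [projectiveMap, PiLp.inner_apply]
    rw [hsum]
    ring
  have hright : ⟪EuclideanSpace.single 1 z, e⟫ = z * e 1 := by
    simp [EuclideanSpace.inner_single_left]
  have hsub : e 0 + e 1 * v - z * e 1 * (1 + u) = e 0 + e 1 * (v - (1 + u) * z) := by ring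
  rw [hleft, hright, div_eq_iff hu', ← sub_eq_zero, hsub]

theorem hausdorffMeasure_normal_directions_eq_zero {W : Set ℝ} (hW : volume W = 0) :
    μH[1] {e : EuclideanSpace ℝ (Fin 2) | ‖e‖ = 1 ∧ ∃ w ∈ W, e 0 + e 1 * w = 0} = 0 := by
  set f : ℝ → EuclideanSpace ℝ (Fin 2) := fun w => (√(1 + w ^ 2))⁻¹ • !₂[-w, 1]
  have hf : ContDiff ℝ 1 f := by
    have hsqrt : ContDiff ℝ 1 fun w : ℝ => (√(1 + w ^ 2))⁻¹ :=
      ContDiff.inv (ContDiff.sqrt (by fun_prop) fun w => by positivity) fun w => by positivity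
    refine hsqrt.smul (contDiff_euclidean.2 fun i => ?_)
    fin_cases i
    · exact contDiff_neg
    · exact contDiff_const
  rw [← hausdorffMeasure_real] at hW
  refine measure_mono_null (t := f '' W ∪ (-f) '' W) ?_ (measure_union_null
    (hausdorffMeasure_image_eq_zero_of_locallyLipschitz hf.locallyLipschitz zero_le_one hW)
    (hausdorffMeasure_image_eq_zero_of_locallyLipschitz hf.neg.locallyLipschitz zero_le_one hW))
  rintro e ⟨he, w, hw, hew⟩
  have he0 : e 0 = e 1 * -w := by linarith
  have he1 : e 1 ^ 2 = (√(1 + w ^ 2))⁻¹ ^ 2 := by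
    rw [inv_pow, Real.sq_sqrt (by positivity)]
    refine eq_inv_of_mul_eq_one_left ?_
    have hnorm := EuclideanSpace.real_norm_sq_eq e
    rw [he, Fin.sum_univ_two, he0] at hnorm
    linarith
  have heq : e = e 1 • !₂[-w, 1] := by ext i; fin_cases i <;> simp [he0]
  rcases sq_eq_sq_iff_eq_or_eq_neg.1 he1 with hpos | hneg
  · exact Or.inl ⟨w, hw, by rw [heq, hpos]⟩
  · exact Or.inr ⟨w, hw, by rw [heq, hneg, neg_smul]; rfl⟩

theorem hausdorffMeasure_directions_gapCantorSet {α γ t : ℝ≥0} (hαt : α + t ≤ 1) (hγ : γ ≤ 1) :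
    μH[(1 : ℝ)] {e : EuclideanSpace ℝ (Fin 2) | ‖e‖ = 1 ∧
      ((fun x => ⟪x, e⟫) '' (projectiveMap '' (gapCantorSet α ×ˢ gapCantorSet γ)) ∩
        (fun x => ⟪x, e⟫) '' (EuclideanSpace.single 1 '' gapCantorSet t)).Nonempty} = 0 := by
  refine measure_mono_null ?_ (hausdorffMeasure_normal_directions_eq_zero
    (volume_slopeSet hαt hγ))
  rintro e ⟨he, _, ⟨_, ⟨⟨u, v⟩, ⟨hu, hv⟩, rfl⟩, rfl⟩, _, ⟨z, hz, rfl⟩, heq⟩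
  have hu' : -1 < u := neg_one_lt_zero.trans_le (gapCantorSet_subset_Icc α hu).1
  exact ⟨he, _, ⟨u, hu, v, hv, z, hz, rfl⟩,
    (inner_projectiveMap_eq_inner_single_iff hu' e).1 heq.symm⟩

end Plane

theorem exists_dimension_splitting {s t : ℝ} (ht : 0 ≤ t) (hts : t ≤ s) (hst : s + t ≤ 2) :
    ∃ α γ τ : ℝ≥0,
      γ ≤ 1 ∧ α + τ ≤ 1 ∧ ENNReal.ofReal s = (α + γ : ℝ≥0) ∧ ENNReal.ofReal t = τ := by
  refine ⟨(s - min s 1).toNNReal, (min s 1).toNNReal, t.toNNReal, ?_, ?_, ?_, rfl⟩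
  · simp
  · rw [← Real.toNNReal_add (by simp) ht, Real.toNNReal_le_one]
    rcases min_cases s 1 with h | h <;> linarith
  · rw [← Real.toNNReal_add (by simp) (le_min (ht.trans hts) zero_le_one), sub_add_cancel]
    rfl

theorem stmt_5_general (s t : ℝ) (hs : 0 ≤ s) (ht : 0 ≤ t) (hst : s + t ≤ 2) :
    ∃ A B : Set (EuclideanSpace ℝ (Fin 2)),
      IsCompact A ∧ IsCompact B ∧
      dimH A = ENNReal.ofReal s ∧ dimH B = ENNReal.ofReal t ∧
      μH[(1 : ℝ)] {e : EuclideanSpace ℝ (Fin 2) | ‖e‖ = 1 ∧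
        ((fun x => ⟪x, e⟫) '' A ∩ (fun x => ⟪x, e⟫) '' B).Nonempty} = 0 := by
  wlog hts : t ≤ s generalizing s t
  · obtain ⟨A, B, hA, hB, hdimA, hdimB, hnull⟩ := this t s ht hs (by linarith) (by linarith)
    exact ⟨B, A, hB, hA, hdimB, hdimA, by simpa only [inter_comm] using hnull⟩
  obtain ⟨α, γ, τ, hγ, hατ, hs', ht'⟩ := exists_dimension_splitting ht hts hst
  have hα : α ≤ 1 := le_self_add.trans hατ
  have hτ : τ ≤ 1 := le_add_self.trans hατ
  have hpos : gapCantorSet α ×ˢ gapCantorSet γ ⊆ {p | -1 < p.1} := fun p hp =>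
    neg_one_lt_zero.trans_le (gapCantorSet_subset_Icc α hp.1).1
  have hiso : Isometry (EuclideanSpace.single 1 : ℝ → EuclideanSpace ℝ (Fin 2)) :=
    Isometry.of_dist_eq fun z w => by simp
  refine ⟨projectiveMap '' (gapCantorSet α ×ˢ gapCantorSet γ),
    EuclideanSpace.single 1 '' gapCantorSet τ, ?_, (isCompact_gapCantorSet τ).image hiso.continuous,
    ?_, ?_, hausdorffMeasure_directions_gapCantorSet hατ hγ⟩
  · exact ((isCompact_gapCantorSet α).prod (isCompact_gapCantorSet γ)).image_of_continuousOn
      (contDiffOn_projectiveMap.continuousOn.mono hpos)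
  · rw [dimH_image_projectiveMap hpos, dimH_gapCantorSet_prod hα hγ, hs']
  · rw [hiso.dimH_image, dimH_gapCantorSet hτ, ht']

theorem stmt_5 (s t : ℝ) (ht0 : 0 < t) (ht1 : t < 1) (hs1 : 1 < s) (hs2 : s < 2)
    (hst : s + t = 2) :
    ∃ A B : Set (EuclideanSpace ℝ (Fin 2)),
      IsCompact A ∧ IsCompact B ∧
      dimH A = ENNReal.ofReal s ∧ dimH B = ENNReal.ofReal t ∧
      μH[(1 : ℝ)] {e : EuclideanSpace ℝ (Fin 2) | ‖e‖ = 1 ∧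
        ((fun x => ⟪x, e⟫) '' A ∩ (fun x => ⟪x, e⟫) '' B).Nonempty} = 0 :=
  stmt_5_general s t (by linarith) ht0.le hst.le
end

section
/- Let n ≥ 2 and let μ, ν be nonzero finite Borel measures on ℝⁿ with compact support such that I₁(μ) < ∞ and I₁(ν) < ∞. For e ∈ S^{n−1}, let f_e and g_e denote the Radon–Nikodym derivatives with respect to one-dimensional Lebesgue measure of the pushforward measures (π_e)♯μ and (π_e)♯ν on ℝ. Then ∫_{S^{n−1}} ( ∫_ℝ f_e(t) g_e(t) dt ) dH^{n−1}(e) > 0. -/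
open MeasureTheory Metric Set
open scoped ENNReal RealInnerProductSpace

/-- The topological support of a measure: points all of whose neighbourhoods
have positive measure. -/
def sptm (n : ℕ) (μ : MeasureTheory.Measure (EuclideanSpace ℝ (Fin n))) :
    Set (EuclideanSpace ℝ (Fin n)) :=
  {x | ∀ r > 0, 0 < μ (Metric.ball x r)}

/-- The `s`-energy `I_s(μ) = ∬ |x-y|^{-s} dμ(x) dμ(y)` of a measure. -/
noncomputable def energyI (n : ℕ) (s : ℝ)
    (μ : MeasureTheory.Measure (EuclideanSpace ℝ (Fin n))) : ℝ≥0∞ :=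
  ∫⁻ x, ∫⁻ y, (‖x - y‖₊ : ℝ≥0∞) ^ (-s) ∂μ ∂μ

/-!
Let `σ` be a finite measure on the unit sphere. As `r → 0`, the integral over `σ` of `∫ f_e g_e` is
the limit of the overlaps obtained by replacing `f_e` by its average over intervals of radius `r`.
By Fubini such an overlap is `∬ σ {e | |⟪x - y, e⟫| ≤ r} / (2 r) dμ(x) dν(y)`. If the normalized
strip measures lie between multiples of `1 / (|x - y| + 1)` and `1 / |x - y|`, the overlaps are
bounded below by a positive constant, while for `μ = ν` they are bounded above by the `1`-energy.
The upper bound controls the averaged projections in `L²`, uniformly in `r`; this makes the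
projections absolutely continuous and lets the lower bound survive the limit.

The direction of a uniformly distributed point of the unit ball is a convenient `σ`: its strips
compare with boxes in an orthonormal basis, and covering by balls bounds it by a multiple of
Hausdorff measure, so the surface measure itself is never computed.
-/

open Filter Topology Module

section Differentiation

theorem lintegral_measure_closedBall_comm {α : Type*} [PseudoMetricSpace α]
    [SecondCountableTopology α] [MeasurableSpace α] [OpensMeasurableSpace α] (P Q : Measure α)
    [SFinite P] [SFinite Q] (r : ℝ) :
    ∫⁻ t, P (closedBall t r) ∂Q = ∫⁻ s, Q (closedBall s r) ∂P := by
  have hS : MeasurableSet {p : α × α | dist p.2 p.1 ≤ r} :=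
    (isClosed_le (by fun_prop) (by fun_prop)).measurableSet
  calc ∫⁻ t, P (closedBall t r) ∂Q = Q.prod P {p | dist p.2 p.1 ≤ r} :=
        (Measure.prod_apply hS).symm
    _ = ∫⁻ s, Q {t | dist s t ≤ r} ∂P := Measure.prod_apply_symm hS
    _ = ∫⁻ s, Q (closedBall s r) ∂P := by simp only [closedBall, dist_comm]

-- By Besicovitch differentiation the hypothesis says that `dm/dP > 0` holds `P`-almost everywhere.
theorem absolutelyContinuous_of_ae_liminf_measure_closedBall_div_ne_top {α : Type*}
    [MetricSpace α] [SecondCountableTopology α] [HasBesicovitchCovering α] [MeasurableSpace α]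
    [BorelSpace α] {P m : Measure α} [IsFiniteMeasure P] [IsLocallyFiniteMeasure m]
    [m.IsOpenPosMeasure] {δ : ℕ → ℝ} (hδ : Tendsto δ atTop (𝓝[>] 0))
    (h : ∀ᵐ x ∂P, liminf (fun k => P (closedBall x (δ k)) / m (closedBall x (δ k))) atTop ≠ ∞) :
    P ≪ m := by
  refine (withDensity_absolutelyContinuous' (Measure.measurable_rnDeriv m P).aemeasurable ?_).trans
    (Measure.absolutelyContinuous_of_le (Measure.withDensity_rnDeriv_le m P))
  filter_upwards [h, Besicovitch.ae_tendsto_rnDeriv m P] with x hx hlim hzero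
  have hinv : Tendsto (fun k => P (closedBall x (δ k)) / m (closedBall x (δ k))) atTop (𝓝 ∞) := by
    rw [← ENNReal.inv_zero, ← hzero]
    refine (tendsto_inv_iff.2 (hlim.comp hδ)).congr' ?_
    filter_upwards [hδ.eventually self_mem_nhdsWithin] with k hk
    exact ENNReal.inv_div (.inl (measure_ne_top _ _)) (.inr (measure_closedBall_pos m x hk).ne')
  exact hx hinv.liminf_eq

/-- The average density of the measure `P` on the interval `[t - r, t + r]`. -/
noncomputable def ballAverage (P : Measure ℝ) (r t : ℝ) : ℝ≥0∞ :=
  P (closedBall t r) / volume (closedBall t r)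

theorem ballAverage_eq_div (P : Measure ℝ) (r t : ℝ) :
    ballAverage P r t = P (closedBall t r) / ENNReal.ofReal (2 * r) := by
  rw [ballAverage, Real.volume_closedBall]

@[fun_prop]
theorem measurable_ballAverage (P : Measure ℝ) [SFinite P] (r : ℝ) :
    Measurable (ballAverage P r) := by
  have hS : MeasurableSet {p : ℝ × ℝ | dist p.2 p.1 ≤ r} :=
    (isClosed_le (by fun_prop) (by fun_prop)).measurableSet
  rw [funext (ballAverage_eq_div P r)]
  exact (measurable_measure_prodMk_left hS).div_const _

theorem ae_tendsto_ballAverage (P : Measure ℝ) [IsLocallyFiniteMeasure P] {δ : ℕ → ℝ}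
    (hδ : Tendsto δ atTop (𝓝[>] 0)) :
    ∀ᵐ t, Tendsto (fun k => ballAverage P (δ k) t) atTop (𝓝 (P.rnDeriv volume t)) := by
  filter_upwards [Besicovitch.ae_tendsto_rnDeriv P volume] with t ht using ht.comp hδ

theorem setLIntegral_closedBall_ballAverage_le (P : Measure ℝ) {r : ℝ} (hr : 0 < r) (s : ℝ) :
    ∫⁻ t in closedBall s r, ballAverage P r t ≤ P (closedBall s (2 * r)) :=
  calc ∫⁻ t in closedBall s r, ballAverage P r t
      ≤ ∫⁻ _t in closedBall s r, P (closedBall s (2 * r)) / ENNReal.ofReal (2 * r) := by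
        refine setLIntegral_mono measurable_const fun t ht => ?_
        rw [ballAverage_eq_div]
        gcongr
        exact closedBall_subset_closedBall' (by linarith [mem_closedBall.1 ht])
    _ = P (closedBall s (2 * r)) := by
        rw [setLIntegral_const, Real.volume_closedBall]
        exact ENNReal.div_mul_cancel (by simpa using hr) ENNReal.ofReal_ne_top

theorem lintegral_ballAverage_sq_le (P : Measure ℝ) [SFinite P] {r : ℝ} (hr : 0 < r) :
    ∫⁻ t, ballAverage P r t ^ 2 ≤ 2 * ∫⁻ s, ballAverage P (2 * r) s ∂P := by
  have hP := measurable_ballAverage P r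
  calc ∫⁻ t, ballAverage P r t ^ 2
      = ∫⁻ t, ballAverage P r t ∂(volume.withDensity (ballAverage P r)) := by
        rw [lintegral_withDensity_eq_lintegral_mul _ hP hP]
        simp only [sq, Pi.mul_apply]
    _ = (∫⁻ t, P (closedBall t r) ∂volume.withDensity (ballAverage P r)) /
          ENNReal.ofReal (2 * r) := by
        simp_rw [ballAverage_eq_div P r, div_eq_mul_inv]
        rw [lintegral_mul_const' _ _ (by simpa using hr)]
    _ = (∫⁻ s, (∫⁻ t in closedBall s r, ballAverage P r t) ∂P) / ENNReal.ofReal (2 * r) := by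
        rw [lintegral_measure_closedBall_comm]
        simp only [withDensity_apply _ measurableSet_closedBall]
    _ ≤ (∫⁻ s, P (closedBall s (2 * r)) ∂P) / ENNReal.ofReal (2 * r) := by
        gcongr with s
        exact setLIntegral_closedBall_ballAverage_le P hr s
    _ = (2 * ∫⁻ s, P (closedBall s (2 * r)) ∂P) / (2 * ENNReal.ofReal (2 * r)) :=
        (ENNReal.mul_div_mul_left _ _ two_ne_zero ENNReal.ofNat_ne_top).symm
    _ = 2 * ∫⁻ s, ballAverage P (2 * r) s ∂P := by
        rw [← ENNReal.ofReal_ofNat 2, ← ENNReal.ofReal_mul zero_le_two]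
        simp_rw [ballAverage_eq_div P (2 * r), div_eq_mul_inv]
        rw [lintegral_mul_const' _ _ (by simpa using hr), mul_assoc]

theorem mul_le_min_mul_sq_add (a b : ℝ≥0∞) {N : ℝ≥0∞} (hN : N ≠ 0) (hN' : N ≠ ∞) :
    a * b ≤ min (a * b) (N * b ^ 2) + N⁻¹ * a ^ 2 := by
  rcases le_total a (N * b) with h | h
  · refine le_add_right (le_min le_rfl ?_)
    calc a * b ≤ N * b * b := by gcongr
      _ = N * b ^ 2 := by ring
  · refine le_add_left ?_
    calc a * b = N⁻¹ * (a * (N * b)) := by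
          rw [mul_left_comm a, ← mul_assoc, ENNReal.inv_mul_cancel hN hN', one_mul]
      _ ≤ N⁻¹ * (a * a) := by gcongr
      _ = N⁻¹ * a ^ 2 := by rw [sq]

theorem lintegral_mul_le_lintegral_min_mul_sq_add {α : Type*} {mα : MeasurableSpace α}
    {m : Measure α} {f g : α → ℝ≥0∞} (hf : Measurable f) (hg : Measurable g) {N : ℝ≥0∞}
    (hN : N ≠ 0) (hN' : N ≠ ∞) :
    ∫⁻ a, f a * g a ∂m ≤
      (∫⁻ a, min (f a * g a) (N * g a ^ 2) ∂m) + N⁻¹ * ∫⁻ a, f a ^ 2 ∂m := by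
  rw [← lintegral_const_mul _ (hf.pow_const 2), ← lintegral_add_left (by fun_prop)]
  exact lintegral_mono fun a => mul_le_min_mul_sq_add _ _ hN hN'

-- Truncating `φ k` at height `N * g` costs at most `C / N` in the integral of `φ k * g`, and the
-- truncated products are dominated by `N * g ^ 2`.
theorem le_lintegral_limsup_mul_of_lintegral_sq_le {α : Type*} {mα : MeasurableSpace α}
    {m : Measure α} {φ : ℕ → α → ℝ≥0∞} {g : α → ℝ≥0∞} {c C : ℝ≥0∞} (hφ : ∀ k, Measurable (φ k))
    (hg : Measurable g) (hC : C ≠ ∞) (hφC : ∀ k, ∫⁻ a, φ k a ^ 2 ∂m ≤ C)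
    (hg2 : ∫⁻ a, g a ^ 2 ∂m ≠ ∞) (hc : ∀ k, c ≤ ∫⁻ a, φ k a * g a ∂m) :
    c ≤ ∫⁻ a, limsup (φ · a) atTop * g a ∂m := by
  have hg_top : ∀ᵐ a ∂m, g a ≠ ∞ := by
    filter_upwards [ae_lt_top (hg.pow_const 2) hg2] with a ha h_top
    simp [h_top] at ha
  have htrunc (N : ℕ) (hN : N ≠ 0) :
      c ≤ (∫⁻ a, limsup (φ · a) atTop * g a ∂m) + (N : ℝ≥0∞)⁻¹ * C := by
    let ψ (k : ℕ) (a : α) : ℝ≥0∞ := min (φ k a * g a) (N * g a ^ 2)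
    have hψ (k : ℕ) : Measurable (ψ k) := by fun_prop
    have hψ_le (k : ℕ) : c ≤ (∫⁻ a, ψ k a ∂m) + (N : ℝ≥0∞)⁻¹ * C :=
      calc c ≤ ∫⁻ a, φ k a * g a ∂m := hc k
        _ ≤ (∫⁻ a, ψ k a ∂m) + (N : ℝ≥0∞)⁻¹ * ∫⁻ a, φ k a ^ 2 ∂m :=
          lintegral_mul_le_lintegral_min_mul_sq_add (hφ k) hg (by simpa using hN) (by simp)
        _ ≤ _ := by gcongr; exact hφC k
    calc c ≤ limsup (fun k => ∫⁻ a, ψ k a ∂m) atTop + (N : ℝ≥0∞)⁻¹ * C :=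
          tsub_le_iff_right.1 <| le_limsup_of_frequently_le <| .of_forall fun k =>
            tsub_le_iff_right.2 (hψ_le k)
      _ ≤ (∫⁻ a, limsup (ψ · a) atTop ∂m) + (N : ℝ≥0∞)⁻¹ * C := by
          gcongr
          refine limsup_lintegral_le (fun a => N * g a ^ 2) hψ
            (fun k => .of_forall fun a => min_le_right _ _) ?_
          rw [lintegral_const_mul _ (hg.pow_const 2)]
          exact ENNReal.mul_ne_top (by simp) hg2
      _ ≤ _ := by
          gcongr ?_ + _
          refine lintegral_mono_ae ?_
          filter_upwards [hg_top] with a ha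
          rw [mul_comm, ← ENNReal.limsup_mul_const_of_ne_top ha]
          exact limsup_le_limsup (.of_forall fun k => min_le_left _ _)
  have hlim : Tendsto (fun N : ℕ => (∫⁻ a, limsup (φ · a) atTop * g a ∂m) + (N : ℝ≥0∞)⁻¹ * C)
      atTop (𝓝 (∫⁻ a, limsup (φ · a) atTop * g a ∂m)) := by
    simpa using
      (ENNReal.Tendsto.mul_const ENNReal.tendsto_inv_nat_nhds_zero (.inr hC)).const_add _
  exact ge_of_tendsto hlim ((eventually_ne_atTop 0).mono htrunc)

theorem lintegral_liminf_sq_le {α : Type*} {mα : MeasurableSpace α} {m : Measure α}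
    {φ : ℕ → α → ℝ≥0∞} {C : ℝ≥0∞} (hφ : ∀ k, Measurable (φ k))
    (hφC : ∀ k, ∫⁻ a, φ k a ^ 2 ∂m ≤ C) : ∫⁻ a, liminf (φ · a) atTop ^ 2 ∂m ≤ C :=
  calc ∫⁻ a, liminf (φ · a) atTop ^ 2 ∂m = ∫⁻ a, liminf (φ · a ^ 2) atTop ∂m :=
        lintegral_congr fun a => Monotone.map_liminf_of_continuousAt
          (f := fun x : ℝ≥0∞ => x ^ 2) (pow_left_mono 2) (φ · a)
          (ENNReal.continuous_pow 2).continuousAt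
    _ ≤ liminf (fun k => ∫⁻ a, φ k a ^ 2 ∂m) atTop :=
        lintegral_liminf_le fun k => (hφ k).pow_const 2
    _ ≤ C := (liminf_le_liminf (.of_forall hφC)).trans_eq (liminf_const C)

theorem lintegral_pos_of_forall_pos {α : Type*} {mα : MeasurableSpace α} {m : Measure α}
    (hm : m ≠ 0) {f : α → ℝ≥0∞} (hf : Measurable f) (hpos : ∀ a, 0 < f a) :
    0 < ∫⁻ a, f a ∂m := by
  have hsupp : Function.support f = univ := eq_univ_of_forall fun a => (hpos a).ne'
  simpa [lintegral_pos_iff_support hf, hsupp, pos_iff_ne_zero] using hm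

end Differentiation

section Projections

variable {E : Type*} [NormedAddCommGroup E] [MeasurableSpace E]

/-- The Riesz `s`-energy `∬ ‖x - y‖ ^ (-s) dμ(x) dμ(y)`. -/
noncomputable def rieszEnergy (s : ℝ) (μ : Measure E) : ℝ≥0∞ :=
  ∫⁻ x, ∫⁻ y, ‖x - y‖ₑ ^ (-s) ∂μ ∂μ

theorem lintegral_lintegral_inv_enorm_sub_add_one_pos [BorelSpace E] [SecondCountableTopology E]
    {μ ν : Measure E} [SFinite μ] (hμ0 : μ ≠ 0) (hν0 : ν ≠ 0) :
    0 < ∫⁻ y, ∫⁻ x, (‖x - y‖ₑ + 1)⁻¹ ∂μ ∂ν := by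
  have hmeas : Measurable fun p : E × E => (‖p.2 - p.1‖ₑ + 1)⁻¹ := by fun_prop
  refine lintegral_pos_of_forall_pos hν0 hmeas.lintegral_prod_right' fun y => ?_
  exact lintegral_pos_of_forall_pos hμ0 (by fun_prop) fun x => by simp

variable [InnerProductSpace ℝ E]

/-- The image of `μ` under `x ↦ ⟪x, e⟫`, which for a unit vector `e` is the projection of `μ` to
the line spanned by `e`. -/
noncomputable def projMeasure (μ : Measure E) (e : E) : Measure ℝ :=
  μ.map (fun x => ⟪x, e⟫)

instance (μ : Measure E) [SFinite μ] (e : E) : SFinite (projMeasure μ e) := by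
  unfold projMeasure; infer_instance

instance (μ : Measure E) [IsFiniteMeasure μ] (e : E) : IsFiniteMeasure (projMeasure μ e) := by
  unfold projMeasure; infer_instance

/-- The overlap at scale `r` of the projections of `μ` and `ν`, averaged over the directions `e`
with respect to `σ`. As `r → 0` it approximates the integral over `e` of the product of the
densities of the projections. -/
noncomputable def projOverlap (σ μ ν : Measure E) (r : ℝ) : ℝ≥0∞ :=
  ∫⁻ e, ∫⁻ t, ballAverage (projMeasure μ e) r t ∂projMeasure ν e ∂σ

variable {σ μ ν : Measure E}

variable [BorelSpace E] [SecondCountableTopology E]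

theorem lintegral_projMeasure {f : ℝ → ℝ≥0∞} (hf : Measurable f) (μ : Measure E) (e : E) :
    ∫⁻ t, f t ∂projMeasure μ e = ∫⁻ x, f ⟪x, e⟫ ∂μ :=
  lintegral_map hf (by fun_prop)

theorem measurable_lintegral_projMeasure [SFinite μ] {f : E × ℝ → ℝ≥0∞} (hf : Measurable f) :
    Measurable fun e => ∫⁻ t, f (e, t) ∂projMeasure μ e := by
  have hpush (e : E) : ∫⁻ t, f (e, t) ∂projMeasure μ e = ∫⁻ x, f (e, ⟪x, e⟫) ∂μ :=
    lintegral_projMeasure (hf.comp measurable_prodMk_left) μ e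
  simp_rw [hpush]
  exact Measurable.lintegral_prod_right' (f := fun p : E × E => f (p.1, ⟪p.2, p.1⟫)) (by fun_prop)

theorem ballAverage_projMeasure (μ : Measure E) (e : E) (r t : ℝ) :
    ballAverage (projMeasure μ e) r t = μ {x | |⟪x, e⟫ - t| ≤ r} / ENNReal.ofReal (2 * r) := by
  rw [ballAverage_eq_div, projMeasure,
    Measure.map_apply (by fun_prop) measurableSet_closedBall]
  rfl

theorem measurable_ballAverage_projMeasure (μ : Measure E) [SFinite μ] (r : ℝ) :
    Measurable fun p : E × ℝ => ballAverage (projMeasure μ p.1) r p.2 := by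
  have hS : MeasurableSet {q : (E × ℝ) × E | |⟪q.2, q.1.1⟫ - q.1.2| ≤ r} :=
    (isClosed_le (by fun_prop) (by fun_prop)).measurableSet
  simp_rw [ballAverage_projMeasure]
  exact (measurable_measure_prodMk_left hS).div_const _

-- Both sides measure the pairs `(e, x)` for which the projections of `x` and `y` are `r`-close.
theorem lintegral_ballAverage_projMeasure_inner [SFinite σ] [SFinite μ] (r : ℝ) (y : E) :
    ∫⁻ e, ballAverage (projMeasure μ e) r ⟪y, e⟫ ∂σ =
      ∫⁻ x, ballAverage (projMeasure σ (x - y)) r 0 ∂μ := by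
  have hS : MeasurableSet {p : E × E | |⟪p.2, p.1⟫ - ⟪y, p.1⟫| ≤ r} :=
    (isClosed_le (by fun_prop) (by fun_prop)).measurableSet
  have hstrip (x : E) :
      {e | |⟪e, x - y⟫ - 0| ≤ r} = {e | |⟪x, e⟫ - ⟪y, e⟫| ≤ r} := by
    simp only [real_inner_comm, inner_sub_right, sub_zero]
  simp_rw [ballAverage_projMeasure, hstrip, div_eq_mul_inv]
  rw [lintegral_mul_const (f := fun e => μ {x | |⟪x, e⟫ - ⟪y, e⟫| ≤ r}) _
      (measurable_measure_prodMk_left hS),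
    lintegral_mul_const (f := fun x => σ {e | |⟪x, e⟫ - ⟪y, e⟫| ≤ r}) _
      (measurable_measure_prodMk_right hS)]
  congr 1
  exact (Measure.prod_apply hS).symm.trans (Measure.prod_apply_symm hS)

theorem projOverlap_eq_lintegral [SFinite σ] [SFinite μ] [SFinite ν] (r : ℝ) :
    projOverlap σ μ ν r = ∫⁻ y, ∫⁻ x, ballAverage (projMeasure σ (x - y)) r 0 ∂μ ∂ν := by
  have hmeas : Measurable fun p : E × E => ballAverage (projMeasure μ p.1) r ⟪p.2, p.1⟫ :=
    (measurable_ballAverage_projMeasure μ r).comp (f := fun p : E × E => (p.1, ⟪p.2, p.1⟫))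
      (by fun_prop)
  calc projOverlap σ μ ν r = ∫⁻ e, ∫⁻ y, ballAverage (projMeasure μ e) r ⟪y, e⟫ ∂ν ∂σ :=
        lintegral_congr fun e => lintegral_projMeasure (measurable_ballAverage _ r) ν e
    _ = ∫⁻ y, ∫⁻ e, ballAverage (projMeasure μ e) r ⟪y, e⟫ ∂σ ∂ν :=
        lintegral_lintegral_swap hmeas.aemeasurable
    _ = _ := lintegral_congr fun y => lintegral_ballAverage_projMeasure_inner r y

theorem lintegral_prod_ballAverage_projMeasure_sq_le [SFinite μ] {r : ℝ} (hr : 0 < r) :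
    ∫⁻ p, ballAverage (projMeasure μ p.1) r p.2 ^ 2 ∂σ.prod volume ≤
      2 * projOverlap σ μ μ (2 * r) := by
  rw [lintegral_prod _ ((measurable_ballAverage_projMeasure μ r).pow_const 2).aemeasurable,
    projOverlap, ← lintegral_const_mul' _ _ ENNReal.ofNat_ne_top]
  exact lintegral_mono fun e => lintegral_ballAverage_sq_le _ hr

theorem projOverlap_self_le [SFinite σ] [SFinite μ] {C : ℝ≥0∞} {r : ℝ} (hC : C ≠ ∞)
    (hσ : ∀ v, ballAverage (projMeasure σ v) r 0 ≤ C * ‖v‖ₑ⁻¹) :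
    projOverlap σ μ μ r ≤ C * rieszEnergy 1 μ := by
  rw [projOverlap_eq_lintegral, rieszEnergy]
  simp_rw [← lintegral_const_mul' C _ hC, ENNReal.rpow_neg_one]
  gcongr with y x
  exact (hσ _).trans_eq (by rw [enorm_sub_rev])

theorem ae_absolutelyContinuous_projMeasure [IsFiniteMeasure μ] {C : ℝ≥0∞} (hC : C ≠ ∞)
    {δ : ℕ → ℝ} (hδ : Tendsto δ atTop (𝓝[>] 0)) (hμ : ∀ k, projOverlap σ μ μ (δ k) ≤ C) :
    ∀ᵐ e ∂σ, projMeasure μ e ≪ volume := by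
  let φ (k : ℕ) (p : E × ℝ) : ℝ≥0∞ := ballAverage (projMeasure μ p.1) (δ k) p.2
  have hφ (k : ℕ) : Measurable (φ k) := measurable_ballAverage_projMeasure μ (δ k)
  have hlim : Measurable fun p => liminf (φ · p) atTop := .liminf hφ
  have hfin : ∫⁻ e, ∫⁻ t, liminf (φ · (e, t)) atTop ∂projMeasure μ e ∂σ ≠ ∞ := by
    refine ne_top_of_le_ne_top hC ?_
    calc ∫⁻ e, ∫⁻ t, liminf (φ · (e, t)) atTop ∂projMeasure μ e ∂σ
        ≤ ∫⁻ e, liminf (fun k => ∫⁻ t, φ k (e, t) ∂projMeasure μ e) atTop ∂σ :=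
          lintegral_mono fun e => lintegral_liminf_le fun k => (hφ k).comp measurable_prodMk_left
      _ ≤ liminf (fun k => projOverlap σ μ μ (δ k)) atTop :=
          lintegral_liminf_le fun k => measurable_lintegral_projMeasure (hφ k)
      _ ≤ C := (liminf_le_liminf (.of_forall hμ)).trans_eq (liminf_const C)
  filter_upwards [ae_lt_top (measurable_lintegral_projMeasure hlim) hfin] with e he
  refine absolutelyContinuous_of_ae_liminf_measure_closedBall_div_ne_top hδ ?_
  filter_upwards [ae_lt_top (hlim.comp measurable_prodMk_left) he.ne] with t ht using ht.ne
theorem lintegral_ballAverage_mul_rnDeriv {P Q : Measure ℝ} [SFinite P] [IsFiniteMeasure Q]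
    (hQ : Q ≪ volume) (r : ℝ) :
    ∫⁻ t, ballAverage P r t * Q.rnDeriv volume t = ∫⁻ t, ballAverage P r t ∂Q := by
  rw [← lintegral_rnDeriv_mul hQ (by fun_prop)]
  simp only [mul_comm]

theorem le_lintegral_rnDeriv_projMeasure_mul [IsFiniteMeasure μ] [IsFiniteMeasure ν]
    {c C : ℝ≥0∞} (hC : C ≠ ∞) (hμ : ∀ r > 0, projOverlap σ μ μ r ≤ C)
    (hν : ∀ r > 0, projOverlap σ ν ν r ≤ C) (hc : ∀ r ∈ Ioo 0 1, c ≤ projOverlap σ μ ν r) :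
    c ≤ ∫⁻ e, (∫⁻ t,
      (projMeasure μ e).rnDeriv volume t * (projMeasure ν e).rnDeriv volume t) ∂σ := by
  obtain ⟨δ, -, hδ_mem, hδ_lim⟩ := exists_seq_strictAnti_tendsto' (zero_lt_one' ℝ)
  have hδ : Tendsto δ atTop (𝓝[>] 0) :=
    tendsto_nhdsWithin_iff.2 ⟨hδ_lim, .of_forall fun k => (hδ_mem k).1⟩
  let φ (ρ : Measure E) (k : ℕ) (p : E × ℝ) : ℝ≥0∞ := ballAverage (projMeasure ρ p.1) (δ k) p.2
  have hφ (ρ : Measure E) [SFinite ρ] (k : ℕ) : Measurable (φ ρ k) :=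
    measurable_ballAverage_projMeasure ρ (δ k)
  let g (p : E × ℝ) : ℝ≥0∞ := liminf (φ ν · p) atTop
  have hg : Measurable g := .liminf (hφ ν)
  have hφ_sq (ρ : Measure E) [IsFiniteMeasure ρ] (hρ : ∀ r > 0, projOverlap σ ρ ρ r ≤ C) (k : ℕ) :
      ∫⁻ p, φ ρ k p ^ 2 ∂σ.prod volume ≤ 2 * C := by
    refine (lintegral_prod_ballAverage_projMeasure_sq_le (hδ_mem k).1).trans ?_
    gcongr
    exact hρ _ (mul_pos two_pos (hδ_mem k).1)
  have h2C : 2 * C ≠ ∞ := ENNReal.mul_ne_top ENNReal.ofNat_ne_top hC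
  have hg_eq (e : E) : (fun t => g (e, t)) =ᵐ[volume] (projMeasure ν e).rnDeriv volume :=
    (ae_tendsto_ballAverage (projMeasure ν e) hδ).mono fun t ht => ht.liminf_eq
  have hφg (k : ℕ) : c ≤ ∫⁻ p, φ μ k p * g p ∂σ.prod volume := by
    rw [lintegral_prod _ (by fun_prop)]
    refine (hc _ (hδ_mem k)).trans_eq (lintegral_congr_ae ?_)
    filter_upwards [ae_absolutelyContinuous_projMeasure hC hδ fun k => hν _ (hδ_mem k).1]
      with e he
    rw [← lintegral_ballAverage_mul_rnDeriv he]
    refine lintegral_congr_ae ?_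
    filter_upwards [hg_eq e] with t ht
    rw [← ht]
  have hlim := le_lintegral_limsup_mul_of_lintegral_sq_le (hφ μ) hg h2C (hφ_sq μ hμ)
    (ne_top_of_le_ne_top h2C (lintegral_liminf_sq_le (hφ ν) (hφ_sq ν hν))) hφg
  rw [lintegral_prod _ (by fun_prop)] at hlim
  refine hlim.trans_eq (lintegral_congr fun e => lintegral_congr_ae ?_)
  filter_upwards [hg_eq e, ae_tendsto_ballAverage (projMeasure μ e) hδ] with t hν_t hμ_t
  rw [← hν_t, ← hμ_t.limsup_eq]

theorem lintegral_rnDeriv_projMeasure_mul_pos [SFinite σ] [IsFiniteMeasure μ] [IsFiniteMeasure ν]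
    {c C : ℝ≥0∞} (hc : c ≠ 0) (hC : C ≠ ∞)
    (hσ_le : ∀ v, ∀ r > 0, ballAverage (projMeasure σ v) r 0 ≤ C * ‖v‖ₑ⁻¹)
    (le_hσ : ∀ v, ∀ r ∈ Ioo 0 1, c * (‖v‖ₑ + 1)⁻¹ ≤ ballAverage (projMeasure σ v) r 0)
    (hμ0 : μ ≠ 0) (hν0 : ν ≠ 0) (hμ : rieszEnergy 1 μ ≠ ∞) (hν : rieszEnergy 1 ν ≠ ∞) :
    0 < ∫⁻ e, (∫⁻ t,
      (projMeasure μ e).rnDeriv volume t * (projMeasure ν e).rnDeriv volume t) ∂σ := by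
  let C' := C * rieszEnergy 1 μ + C * rieszEnergy 1 ν
  have hC' : C' ≠ ∞ := ENNReal.add_ne_top.2 ⟨ENNReal.mul_ne_top hC hμ, ENNReal.mul_ne_top hC hν⟩
  refine (ENNReal.mul_pos hc
    (lintegral_lintegral_inv_enorm_sub_add_one_pos hμ0 hν0).ne').trans_le
    (le_lintegral_rnDeriv_projMeasure_mul hC'
      (fun r hr => (projOverlap_self_le hC (hσ_le · r hr)).trans le_self_add)
      (fun r hr => (projOverlap_self_le hC (hσ_le · r hr)).trans le_add_self) fun r hr => ?_)
  calc c * ∫⁻ y, ∫⁻ x, (‖x - y‖ₑ + 1)⁻¹ ∂μ ∂ν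
      ≤ ∫⁻ y, ∫⁻ x, c * (‖x - y‖ₑ + 1)⁻¹ ∂μ ∂ν :=
        (lintegral_const_mul_le _ _).trans (lintegral_mono fun y => lintegral_const_mul_le _ _)
    _ ≤ ∫⁻ y, ∫⁻ x, ballAverage (projMeasure σ (x - y)) r 0 ∂μ ∂ν :=
        lintegral_mono fun y => lintegral_mono fun x => le_hσ _ r hr
    _ = projOverlap σ μ ν r := (projOverlap_eq_lintegral r).symm

end Projections

section DirectionMeasure

variable {E : Type*} [NormedAddCommGroup E] [InnerProductSpace ℝ E]

theorem abs_inner_le_norm_of_norm_eq_one {a : E} (ha : ‖a‖ = 1) (z : E) : |⟪a, z⟫| ≤ ‖z‖ := by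
  simpa [ha] using abs_real_inner_le_norm a z

theorem norm_le_card_mul_of_forall_abs_inner_le {ι : Type*} [Fintype ι]
    (b : OrthonormalBasis ι ℝ E) {z : E} {R : ℝ} (h : ∀ j, |⟪b j, z⟫| ≤ R) :
    ‖z‖ ≤ Fintype.card ι * R :=
  calc ‖z‖ = ‖∑ j, ⟪b j, z⟫ • b j‖ := by rw [b.sum_repr']
    _ ≤ ∑ j, ‖⟪b j, z⟫ • b j‖ := norm_sum_le _ _
    _ ≤ ∑ _j : ι, R := Finset.sum_le_sum fun j _ => by simpa [norm_smul] using h j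
    _ = Fintype.card ι * R := by simp

theorem setOf_inner_mem_subset_setOf_abs_inner_le {ι : Type*} [Fintype ι] [Nontrivial ι]
    (b : OrthonormalBasis ι ℝ E) (i : ι) {v : E} (hv : ∀ z, ⟪v, z⟫ = ‖v‖ * ⟪b i, z⟫) {r ε : ℝ}
    (hr : r ∈ Ioo 0 1) (hε : 0 < ε) (hε_lt : Fintype.card ι * (2 * ε) < 1) :
    {z : E | ⟪b i, z⟫ ∈ closedBall 0 (ε * r / (‖v‖ + 1)) ∧ ∀ j ≠ i, ⟪b j, z⟫ ∈ Icc ε (2 * ε)} ⊆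
      {z : E | |⟪v, z⟫| ≤ r * ‖z‖ ∧ ‖z‖ < 1} := by
  rintro z ⟨hzi, hzj⟩
  rw [mem_closedBall_zero_iff, Real.norm_eq_abs, le_div_iff₀ (by positivity)] at hzi
  obtain ⟨j, hj⟩ := exists_ne i
  have hε_le : ε ≤ ‖z‖ := (hzj j hj).1.trans <|
    (le_abs_self _).trans (abs_inner_le_norm_of_norm_eq_one (b.norm_eq_one j) z)
  have hz_coord (k : ι) : |⟪b k, z⟫| ≤ 2 * ε := by
    rcases eq_or_ne k i with rfl | hk
    · nlinarith [hr.2, norm_nonneg v, abs_nonneg ⟪b k, z⟫]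
    · exact abs_le.2 ⟨by linarith [(hzj k hk).1], (hzj k hk).2⟩
  refine ⟨?_, (norm_le_card_mul_of_forall_abs_inner_le b hz_coord).trans_lt hε_lt⟩
  calc |⟪v, z⟫| = ‖v‖ * |⟪b i, z⟫| := by rw [hv, abs_mul, abs_norm]
    _ ≤ ε * r := by linarith [abs_nonneg ⟪b i, z⟫]
    _ ≤ r * ‖z‖ := by nlinarith [hr.1]

variable [FiniteDimensional ℝ E]

theorem exists_orthonormalBasis_inner_eq [Nontrivial E] (v : E) :
    ∃ (b : OrthonormalBasis (Fin (finrank ℝ E)) ℝ E) (i : Fin (finrank ℝ E)),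
      ∀ z, ⟪v, z⟫ = ‖v‖ * ⟪b i, z⟫ := by
  obtain ⟨a, ha, hva⟩ : ∃ a : E, ‖a‖ = 1 ∧ v = ‖v‖ • a := by
    rcases eq_or_ne v 0 with rfl | hv
    · obtain ⟨a, ha⟩ := exists_norm_eq E zero_le_one
      exact ⟨a, ha, by simp⟩
    · exact ⟨‖v‖⁻¹ • v, norm_smul_inv_norm hv, by simp [smul_smul, hv]⟩
  let i : Fin (finrank ℝ E) := ⟨0, finrank_pos⟩
  have horth : Orthonormal ℝ (({i} : Set _).domRestrict fun _ => a) :=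
    ⟨fun _ => ha, fun j k hjk => (hjk (Subsingleton.elim j k)).elim⟩
  obtain ⟨b, hb⟩ := horth.exists_orthonormalBasis_extension_of_card_eq (by simp)
  exact ⟨b, i, fun z => by rw [hb i rfl, ← real_inner_smul_left, ← hva]⟩

variable [MeasurableSpace E] [BorelSpace E]

theorem volume_setOf_forall_inner_mem {ι : Type*} [Fintype ι] (b : OrthonormalBasis ι ℝ E)
    (s : ι → Set ℝ) : volume {z : E | ∀ j, ⟪b j, z⟫ ∈ s j} = ∏ j, volume (s j) := by
  have hbox : {z : E | ∀ j, ⟪b j, z⟫ ∈ s j} =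
      b.measurableEquiv ⁻¹' ((MeasurableEquiv.toLp 2 (ι → ℝ)).symm ⁻¹' univ.pi s) := by
    ext z
    simp [OrthonormalBasis.measurableEquiv, ← b.repr_apply_apply]
  rw [hbox, b.measurePreserving_measurableEquiv.measure_preimage_equiv,
    (EuclideanSpace.volume_preserving_symm_measurableEquiv_toLp ι).measure_preimage_equiv,
    volume_pi, Measure.pi_pi]

theorem volume_setOf_inner_mem_and {ι : Type*} [Fintype ι] (b : OrthonormalBasis ι ℝ E)
    (i : ι) (s t : Set ℝ) :
    volume {z : E | ⟪b i, z⟫ ∈ s ∧ ∀ j ≠ i, ⟪b j, z⟫ ∈ t} =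
      volume s * volume t ^ (Fintype.card ι - 1) := by
  classical
  have hbox : {z : E | ⟪b i, z⟫ ∈ s ∧ ∀ j ≠ i, ⟪b j, z⟫ ∈ t} =
      {z | ∀ j, ⟪b j, z⟫ ∈ Function.update (fun _ => t) i s j} := by
    ext z
    simpa using (Function.forall_update_iff (fun _ => t) fun j u => ⟪b j, z⟫ ∈ u).symm
  rw [hbox, volume_setOf_forall_inner_mem, ← Finset.mul_prod_erase _ _ (Finset.mem_univ i)]
  rw [Finset.prod_congr rfl fun j hj => by
    rw [Function.update_of_ne (Finset.ne_of_mem_erase hj)]]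
  simp

variable (E) in
/-- The distribution of the direction `z / ‖z‖` of a point `z` of the unit ball chosen according to
Lebesgue measure. It is a multiple of the surface measure of the unit sphere. -/
noncomputable def directionMeasure : Measure E :=
  (volume.restrict (ball 0 1)).map fun z => ‖z‖⁻¹ • z

instance : IsFiniteMeasure (directionMeasure E) := by
  have : IsFiniteMeasure ((volume : Measure E).restrict (ball 0 1)) :=
    isFiniteMeasure_restrict.2 measure_ball_lt_top.ne
  unfold directionMeasure
  infer_instance

theorem directionMeasure_apply {s : Set E} (hs : MeasurableSet s) :
    directionMeasure E s = volume {z : E | ‖z‖⁻¹ • z ∈ s ∧ ‖z‖ < 1} := by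
  have hdir : Measurable fun z : E => ‖z‖⁻¹ • z := by fun_prop
  rw [directionMeasure, Measure.map_apply hdir hs, Measure.restrict_apply (hdir hs), ball_zero_eq]
  rfl

theorem directionMeasure_sphere_compl [Nontrivial E] :
    directionMeasure E (sphere 0 1)ᶜ = 0 := by
  rw [directionMeasure_apply isClosed_sphere.measurableSet.compl]
  refine measure_mono_null (t := {0}) (fun z hz => ?_) (measure_singleton 0)
  by_contra h0
  exact hz.1 (by simpa using norm_smul_inv_norm (𝕜 := ℝ) h0)

theorem ballAverage_projMeasure_directionMeasure (v : E) {r : ℝ} (hr : 0 ≤ r) :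
    ballAverage (projMeasure (directionMeasure E) v) r 0 =
      volume {z : E | |⟪v, z⟫| ≤ r * ‖z‖ ∧ ‖z‖ < 1} / ENNReal.ofReal (2 * r) := by
  have hS : MeasurableSet {e : E | |⟪e, v⟫ - 0| ≤ r} :=
    (isClosed_le (by fun_prop) (by fun_prop)).measurableSet
  have hstrip (z : E) : |⟪‖z‖⁻¹ • z, v⟫ - 0| ≤ r ↔ |⟪v, z⟫| ≤ r * ‖z‖ := by
    rcases eq_or_ne z 0 with rfl | hz
    · simpa using hr
    · rw [sub_zero, real_inner_smul_left, abs_mul, abs_inv, abs_norm, real_inner_comm,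
        inv_mul_le_iff₀ (norm_pos_iff.2 hz), mul_comm r]
  rw [ballAverage_projMeasure, directionMeasure_apply hS]
  simp only [mem_ofPred_eq, hstrip]

theorem ballAverage_projMeasure_directionMeasure_le [Nontrivial E] (v : E) {r : ℝ} (hr : 0 < r) :
    ballAverage (projMeasure (directionMeasure E) v) r 0 ≤ 2 ^ (finrank ℝ E - 1) * ‖v‖ₑ⁻¹ := by
  rcases eq_or_ne v 0 with rfl | hv
  · simp [ENNReal.mul_top]
  obtain ⟨b, i, hbv⟩ := exists_orthonormalBasis_inner_eq v
  have hv_pos : 0 < ‖v‖ := norm_pos_iff.2 hv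
  have hsub : {z : E | |⟪v, z⟫| ≤ r * ‖z‖ ∧ ‖z‖ < 1} ⊆
      {z | ⟪b i, z⟫ ∈ closedBall 0 (r / ‖v‖) ∧ ∀ j ≠ i, ⟪b j, z⟫ ∈ closedBall 0 1} := by
    rintro z ⟨hvz, hz⟩
    rw [hbv, abs_mul, abs_norm] at hvz
    simp only [mem_ofPred_eq, mem_closedBall_zero_iff, Real.norm_eq_abs]
    refine ⟨(le_div_iff₀' hv_pos).2 (hvz.trans (mul_le_of_le_one_right hr.le hz.le)), fun j _ => ?_⟩
    exact (abs_inner_le_norm_of_norm_eq_one (b.norm_eq_one j) z).trans hz.le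
  have hvol : ENNReal.ofReal (2 * (r / ‖v‖)) = ‖v‖ₑ⁻¹ * ENNReal.ofReal (2 * r) := by
    rw [← ofReal_norm, ← ENNReal.ofReal_inv_of_pos hv_pos, ← ENNReal.ofReal_mul (by positivity)]
    ring_nf
  rw [ballAverage_projMeasure_directionMeasure v hr.le]
  refine ENNReal.div_le_of_le_mul ((measure_mono hsub).trans_eq ?_)
  rw [volume_setOf_inner_mem_and, Real.volume_closedBall, Real.volume_closedBall, hvol,
    Fintype.card_fin, mul_one, ENNReal.ofReal_ofNat]
  ring

theorem le_ballAverage_projMeasure_directionMeasure (hE : 2 ≤ finrank ℝ E) (v : E) {r : ℝ}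
    (hr : r ∈ Ioo 0 1) :
    ENNReal.ofReal ((4 * finrank ℝ E : ℝ)⁻¹ ^ finrank ℝ E) * (‖v‖ₑ + 1)⁻¹ ≤
      ballAverage (projMeasure (directionMeasure E) v) r 0 := by
  have : Nontrivial E := nontrivial_of_finrank_pos (R := ℝ) (by lia)
  obtain ⟨b, i, hbv⟩ := exists_orthonormalBasis_inner_eq v
  have hr0 : 0 < r := hr.1
  have : Nontrivial (Fin (finrank ℝ E)) := Fin.nontrivial_iff_two_le.2 hE
  set ε : ℝ := (4 * finrank ℝ E : ℝ)⁻¹ with hε_def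
  have hε : 0 < ε := by positivity
  have hsub := setOf_inner_mem_subset_setOf_abs_inner_le b i hbv hr hε <| by
    rw [hε_def, Fintype.card_fin]
    field_simp
    norm_num
  have hvol : ENNReal.ofReal (ε ^ finrank ℝ E) * (‖v‖ₑ + 1)⁻¹ * ENNReal.ofReal (2 * r) =
      ENNReal.ofReal (2 * (ε * r / (‖v‖ + 1))) *
        ENNReal.ofReal (2 * ε - ε) ^ (finrank ℝ E - 1) := by
    rw [← ofReal_norm, ← ENNReal.ofReal_one, ← ENNReal.ofReal_add (by positivity) zero_le_one,
      ← ENNReal.ofReal_inv_of_pos (by positivity), ← ENNReal.ofReal_mul (by positivity),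
      ← ENNReal.ofReal_mul (by positivity), ← ENNReal.ofReal_pow (by linarith),
      ← ENNReal.ofReal_mul (by positivity), ← mul_pow_sub_one (finrank_pos (R := ℝ) (M := E)).ne' ε]
    congr 1
    ring
  rw [ballAverage_projMeasure_directionMeasure v hr0.le,
    ENNReal.le_div_iff_mul_le (by simp [hr0]) (.inl ENNReal.ofReal_ne_top), hvol,
    ← Real.volume_Icc, ← Real.volume_closedBall 0]
  refine Eq.trans_le ?_ (measure_mono hsub)
  rw [volume_setOf_inner_mem_and, Fintype.card_fin]

theorem directionMeasure_closedEBall_le [Nontrivial E] (a : E) (D : ℝ≥0∞) :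
    directionMeasure E (closedEBall a D) ≤ 2 ^ finrank ℝ E * D ^ (finrank ℝ E - 1) := by
  obtain ⟨b, i, hba⟩ := exists_orthonormalBasis_inner_eq a
  have hsub : {z : E | ‖z‖⁻¹ • z ∈ closedEBall a D ∧ ‖z‖ < 1} ⊆
      {z | ⟪b i, z⟫ ∈ closedBall 0 1 ∧ ∀ j ≠ i, ⟪b j, z⟫ ∈ closedEBall 0 D} := by
    rintro z ⟨hza, hz⟩
    have hzi : ⟪b i, z⟫ ∈ closedBall 0 1 := by
      simpa using (abs_inner_le_norm_of_norm_eq_one (b.norm_eq_one i) z).trans hz.le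
    refine ⟨hzi, fun j hj => ?_⟩
    have hz_a : ⟪b j, z⟫ = ‖z‖ * ⟪b j, ‖z‖⁻¹ • z - a⟫ := by
      have hja : ⟪b j, a⟫ = 0 := by
        rw [real_inner_comm, hba, b.inner_eq_zero hj.symm, mul_zero]
      rcases eq_or_ne z 0 with rfl | hz0
      · simp
      · rw [inner_sub_right, hja, sub_zero, real_inner_smul_right,
          mul_inv_cancel_left₀ (norm_ne_zero_iff.2 hz0)]
    refine le_trans ?_ (mem_closedEBall.1 hza)
    rw [edist_dist, edist_dist, dist_zero_right, dist_eq_norm, hz_a, norm_mul, norm_norm]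
    gcongr
    exact (mul_le_of_le_one_left (norm_nonneg _) hz.le).trans
      (abs_inner_le_norm_of_norm_eq_one (b.norm_eq_one j) _)
  rw [directionMeasure_apply isClosed_closedEBall.measurableSet]
  refine (measure_mono hsub).trans_eq ?_
  rw [volume_setOf_inner_mem_and, Real.volume_closedBall, Real.volume_closedEBall,
    Fintype.card_fin, mul_one, ENNReal.ofReal_ofNat, mul_pow, ← mul_assoc, ← pow_succ',
    Nat.sub_add_cancel finrank_pos]

theorem directionMeasure_le_ediam_pow [Nontrivial E] (s : Set E) :
    directionMeasure E s ≤ 2 ^ finrank ℝ E * ediam s ^ (finrank ℝ E - 1) := by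
  rcases s.eq_empty_or_nonempty with rfl | ⟨a, ha⟩
  · simp
  · exact (measure_mono fun x hx => edist_le_ediam_of_mem hx ha).trans
      (directionMeasure_closedEBall_le a _)

theorem directionMeasure_le_hausdorffMeasure [Nontrivial E] :
    directionMeasure E ≤
      (2 ^ finrank ℝ E : ℝ≥0∞) • (μH[(finrank ℝ E : ℝ) - 1]).restrict (sphere 0 1) := by
  have hC : (2 ^ finrank ℝ E : ℝ≥0∞) ≠ 0 := by simp
  have hC' : (2 ^ finrank ℝ E : ℝ≥0∞) ≠ ∞ := by simp
  have hle : (2 ^ finrank ℝ E : ℝ≥0∞)⁻¹ • directionMeasure E ≤ μH[(finrank ℝ E : ℝ) - 1] := by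
    refine Measure.le_hausdorffMeasure _ _ 1 one_pos fun s _ => ?_
    rw [← Nat.cast_pred finrank_pos, ENNReal.rpow_natCast, Measure.smul_apply, smul_eq_mul]
    exact (ENNReal.inv_mul_le_iff hC hC').2 (directionMeasure_le_ediam_pow s)
  calc directionMeasure E = (directionMeasure E).restrict (sphere 0 1) :=
        (Measure.restrict_eq_self_of_ae_mem directionMeasure_sphere_compl).symm
    _ = (2 ^ finrank ℝ E : ℝ≥0∞) •
          ((2 ^ finrank ℝ E : ℝ≥0∞)⁻¹ • directionMeasure E).restrict (sphere 0 1) := by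
        rw [Measure.restrict_smul, smul_smul, ENNReal.mul_inv_cancel hC hC', one_smul]
    _ ≤ _ := by gcongr

end DirectionMeasure

theorem stmt_6_general {E : Type*} [NormedAddCommGroup E] [InnerProductSpace ℝ E]
    [FiniteDimensional ℝ E] [MeasurableSpace E] [BorelSpace E] (hE : 2 ≤ finrank ℝ E)
    (μ ν : Measure E) [IsFiniteMeasure μ] [IsFiniteMeasure ν] (hμ0 : μ ≠ 0) (hν0 : ν ≠ 0)
    (hμ : rieszEnergy 1 μ < ∞) (hν : rieszEnergy 1 ν < ∞) :
    0 < ∫⁻ e in sphere (0 : E) 1, (∫⁻ t, (μ.map (fun x => ⟪x, e⟫)).rnDeriv volume t *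
      (ν.map (fun x => ⟪x, e⟫)).rnDeriv volume t) ∂μH[(finrank ℝ E : ℝ) - 1] := by
  have : Nontrivial E := nontrivial_of_finrank_pos (R := ℝ) (by lia)
  have hpos := lintegral_rnDeriv_projMeasure_mul_pos (σ := directionMeasure E) (by simp)
    (ENNReal.pow_ne_top ENNReal.ofNat_ne_top)
    (fun v r hr => ballAverage_projMeasure_directionMeasure_le v hr)
    (fun v r hr => le_ballAverage_projMeasure_directionMeasure hE v hr) hμ0 hν0 hμ.ne hν.ne
  have hle := hpos.trans_le (lintegral_mono' directionMeasure_le_hausdorffMeasure le_rfl)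
  rw [lintegral_smul_measure] at hle
  exact pos_of_mul_pos_right hle zero_le

theorem stmt_6 (n : ℕ) (hn : 2 ≤ n)
    (μ ν : Measure (EuclideanSpace ℝ (Fin n)))
    [IsFiniteMeasure μ] [IsFiniteMeasure ν] (hμ0 : μ ≠ 0) (hν0 : ν ≠ 0)
    (hμc : IsCompact (sptm n μ)) (hνc : IsCompact (sptm n ν))
    (hμe : energyI n 1 μ < ∞) (hνe : energyI n 1 ν < ∞) :
    0 < ∫⁻ e in sphere (0 : EuclideanSpace ℝ (Fin n)) 1,
        (∫⁻ t : ℝ,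
          (μ.map (fun x => ⟪x, e⟫)).rnDeriv volume t *
          (ν.map (fun x => ⟪x, e⟫)).rnDeriv volume t) ∂μH[(n : ℝ) - 1] := by
  simpa using stmt_6_general (by simpa using hn) μ ν hμ0 hν0 hμe hνe
end
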